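/- arXiv:math/0308086 — 2 statements merged into one kernel-verified Lean document; each statement's English description precedes it below -/
import Mathlib

section
/- For every real z > 0, the Barnes G-function satisfies log G(z+1) = (z²/2)·(log z − 3/2) − z·ζ'(0) + ζ'(−1) − ∫₀^∞ x·log(x² + z²)/(e^{2πx} − 1) dx, where ζ' is the derivative of the Riemann zeta function. -/
open Real MeasureTheory Filter

/-- Hurwitz zeta function ζ(s, a) for real a > 0, via analytic continuation. -/
noncomputable def hurwitzZetaReal (s : ℂ) (a : ℝ) : ℂ :=
  HurwitzZeta.hurwitzZeta (a : UnitAddCircle) s -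
    ∑ k ∈ Finset.range (⌈a⌉₊ - 1), ((a - (⌈a⌉₊ - 1) + k : ℝ) : ℂ) ^ (-s)

/-- ζ'(-1, a): derivative of the Hurwitz zeta function w.r.t. s at s = -1. -/
noncomputable def hurwitzZetaDerivNegOne (a : ℝ) : ℂ :=
  deriv (fun s => hurwitzZetaReal s a) (-1)

/-- Logarithm of the Glaisher–Kinkelin constant: log A = 1/12 - ζ'(-1). -/
noncomputable def logA : ℂ := 1 / 12 - deriv riemannZeta (-1)

/-- log G(z+1) for z > 0, via log G(z+1) = z log Γ(z) + ζ'(-1) - ζ'(-1, z). -/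
noncomputable def logBarnesG1p (z : ℝ) : ℂ :=
  z * Real.log (Real.Gamma z) + deriv riemannZeta (-1) - hurwitzZetaDerivNegOne z

/-- log G(x) for x > 0, via the recurrence G(z+1) = Γ(z) G(z) on (0, 1]. -/
noncomputable def logBarnesG (x : ℝ) : ℂ :=
  if x ≤ 1 then logBarnesG1p x - Real.log (Real.Gamma x) else logBarnesG1p (x - 1)

/-- The Barnes G-function (for positive real argument). -/
noncomputable def barnesG (x : ℝ) : ℂ := Complex.exp (logBarnesG x)

/-- The digamma function ψ = (log Γ)'. -/
noncomputable def digamma (x : ℝ) : ℝ := deriv (fun t => Real.log (Real.Gamma t)) x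

/-- The trigamma function ψ⁽¹⁾ = (log Γ)''. -/
noncomputable def trigamma (x : ℝ) : ℝ :=
  deriv (deriv (fun t => Real.log (Real.Gamma t))) x

/-- The Clausen function Cl₂(x) = ∑_{k ≥ 1} sin(k x) / k². -/
noncomputable def clausen2 (x : ℝ) : ℝ := ∑' k : ℕ, Real.sin ((k + 1) * x) / (k + 1) ^ 2

/-- Catalan's constant. -/
noncomputable def catalanConst : ℝ := ∑' k : ℕ, (-1 : ℝ) ^ k / (2 * (k : ℝ) + 1) ^ 2

/-!
Inserting Legendre's integral `∫₀^∞ sin(tx) / (e^{2πx} - 1) dx` into the Mellin transform that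
represents `Γ(s) ζ(s, a)` and exchanging the integrals gives Hermite's formula for `ζ(s, a)`, which
extends to all `s ≠ 1` by analytic continuation. Its derivative at `s = -1` consists of elementary
terms, the logarithmic integral of the theorem, and `a` times Binet's arctangent integral. Its
derivative at `s = 0` is elementary up to the same arctangent integral, and the Bohr–Mollerup
theorem identifies it with `log Γ(a)` up to the constant `ζ'(0) = -log(2π) / 2`. The arctangent
integrals therefore cancel in `z log Γ(z) - ζ'(-1, z)`.
-/

section

open Set
open scoped Topology Nat

/-! ### Parametric integrals and Euler's integral -/

theorem integrable_deriv_and_hasDerivAt_integral_of_norm_le {α E : Type*} [MeasurableSpace α]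
    {μ : Measure α} [NormedAddCommGroup E] [NormedSpace ℂ E] {F : ℂ → α → E} {s₀ : ℂ} {R : ℝ}
    {bound : α → ℝ} (hR : 0 < R) (hF_meas : ∀ s, AEStronglyMeasurable (F s) μ)
    (hF_diff : ∀ᵐ x ∂μ, DifferentiableOn ℂ (F · x) (Metric.ball s₀ R))
    (hF_le : ∀ᵐ x ∂μ, ∀ s ∈ Metric.ball s₀ R, ‖F s x‖ ≤ bound x) (hbound : Integrable bound μ) :
    Integrable (fun x => deriv (F · x) s₀) μ ∧
      HasDerivAt (fun s => ∫ x, F s x ∂μ) (∫ x, deriv (F · x) s₀ ∂μ) s₀ := by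
  have hs₀ : s₀ ∈ Metric.ball s₀ R := Metric.mem_ball_self hR
  have hF_int : Integrable (F s₀) μ :=
    hbound.mono' (hF_meas s₀) (hF_le.mono fun x hx => hx s₀ hs₀)
  have hF'_meas : AEStronglyMeasurable (fun x => deriv (F · x) s₀) μ := by
    refine aestronglyMeasurable_of_tendsto_ae (𝓝[≠] (0 : ℂ))
      (f := fun t x => t⁻¹ • (F (s₀ + t) x - F s₀ x))
      (fun t => ((hF_meas _).sub (hF_meas s₀)).const_smul t⁻¹) ?_
    filter_upwards [hF_diff] with x hx
    exact hasDerivAt_iff_tendsto_slope_zero.1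
      (hx.differentiableAt (Metric.isOpen_ball.mem_nhds hs₀)).hasDerivAt
  have hsub {v : ℂ} (hv : v ∈ Metric.ball s₀ (R / 2)) :
      Metric.closedBall v (R / 2) ⊆ Metric.ball s₀ R :=
    Metric.closedBall_subset_ball' (by linarith [Metric.mem_ball.1 hv])
  refine hasDerivAt_integral_of_dominated_loc_of_deriv_le
    (F' := fun s x => deriv (F · x) s) (bound := fun x => bound x / (R / 2))
    (Metric.ball_mem_nhds s₀ (half_pos hR)) (Eventually.of_forall hF_meas) hF_int hF'_meas ?_
    (hbound.div_const _) ?_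
  · filter_upwards [hF_diff, hF_le] with x hdiff hle v hv
    exact Complex.norm_deriv_le_of_forall_mem_sphere_norm_le (half_pos hR)
      (hdiff.diffContOnCl_ball (hsub hv))
      fun z hz => hle z (hsub hv (Metric.sphere_subset_closedBall hz))
  · filter_upwards [hF_diff] with x hdiff v hv
    exact (hdiff.differentiableAt (Metric.isOpen_ball.mem_nhds
      (hsub hv (Metric.mem_closedBall_self (half_pos hR).le)))).hasDerivAt

theorem norm_cpow_mul_cexp_neg_mul (s w : ℂ) {t : ℝ} (ht : 0 < t) :
    ‖(t : ℂ) ^ (s - 1) • Complex.exp (-(w * t))‖ = t ^ (s.re - 1) * Real.exp (-w.re * t) := by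
  rw [norm_smul, Complex.norm_cpow_eq_rpow_re_of_pos ht, Complex.norm_exp]
  simp

theorem integrableOn_rpow_mul_exp_neg_mul {p b : ℝ} (hp : -1 < p) (hb : 0 < b) :
    IntegrableOn (fun t : ℝ => t ^ p * Real.exp (-b * t)) (Ioi 0) := by
  simpa using integrableOn_rpow_mul_exp_neg_mul_rpow hp one_pos hb

theorem aestronglyMeasurable_cpow_mul_cexp_neg_mul (s w : ℂ) :
    AEStronglyMeasurable (fun t : ℝ => (t : ℂ) ^ (s - 1) • Complex.exp (-(w * t)))
      (volume.restrict (Ioi 0)) := by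
  apply Measurable.aestronglyMeasurable
  fun_prop

theorem mellinConvergent_cexp_neg_mul {s w : ℂ} (hs : 0 < s.re) (hw : 0 < w.re) :
    MellinConvergent (fun t : ℝ => Complex.exp (-(w * t))) s := by
  refine (integrable_norm_iff (aestronglyMeasurable_cpow_mul_cexp_neg_mul s w)).1 ?_
  refine (integrableOn_rpow_mul_exp_neg_mul (by linarith : -1 < s.re - 1) hw).congr_fun
    (fun t ht => ?_) measurableSet_Ioi
  exact (norm_cpow_mul_cexp_neg_mul s w ht).symm

theorem differentiableAt_mellin_cexp_neg_mul {s w : ℂ} (hs : 0 < s.re) (hw : 0 < w.re) :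
    DifferentiableAt ℂ (fun v : ℂ => mellin (fun t : ℝ => Complex.exp (-(v * t))) s) w := by
  have hre {v : ℂ} (hv : v ∈ Metric.ball w (w.re / 2)) : w.re / 2 ≤ v.re := by
    have h := (Complex.abs_re_le_norm (v - w)).trans (mem_ball_iff_norm.1 hv).le
    rw [Complex.sub_re] at h
    linarith [(abs_le.1 h).1]
  refine (integrable_deriv_and_hasDerivAt_integral_of_norm_le (half_pos hw)
    (aestronglyMeasurable_cpow_mul_cexp_neg_mul s) (Eventually.of_forall fun t => ?_) ?_
    (integrableOn_rpow_mul_exp_neg_mul (by linarith : -1 < s.re - 1)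
      (half_pos hw))).2.differentiableAt
  · fun_prop
  · filter_upwards [ae_restrict_mem measurableSet_Ioi] with t (ht : 0 < t) v hv
    rw [norm_cpow_mul_cexp_neg_mul s v ht]
    gcongr
    exact hre hv

/-- Both sides are holomorphic in `w`, and for real `w` this is Euler's integral. -/
theorem mellin_cexp_neg_mul {s w : ℂ} (hs : 0 < s.re) (hw : 0 < w.re) :
    mellin (fun t : ℝ => Complex.exp (-(w * t))) s = w ^ (-s) * Complex.Gamma s := by
  have hopen : IsOpen {v : ℂ | 0 < v.re} := isOpen_lt continuous_const Complex.continuous_re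
  have hlhs : AnalyticOnNhd ℂ (fun v : ℂ => mellin (fun t : ℝ => Complex.exp (-(v * t))) s)
      {v | 0 < v.re} := DifferentiableOn.analyticOnNhd
    (fun v hv => (differentiableAt_mellin_cexp_neg_mul hs hv).differentiableWithinAt) hopen
  have hrhs : AnalyticOnNhd ℂ (fun v : ℂ => v ^ (-s) * Complex.Gamma s) {v | 0 < v.re} :=
    DifferentiableOn.analyticOnNhd (fun v hv => ((differentiableAt_id.cpow_const
      (Or.inl hv)).mul_const _).differentiableWithinAt) hopen
  have hreal {r : ℝ} (hr : 0 < r) : mellin (fun t : ℝ => Complex.exp (-((r : ℂ) * t))) s =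
      (r : ℂ) ^ (-s) * Complex.Gamma s := by
    have harg : (r : ℂ).arg ≠ π := by
      rw [Complex.arg_ofReal_of_nonneg hr.le]
      exact Real.pi_pos.ne
    simp only [mellin, smul_eq_mul]
    rw [Complex.integral_cpow_mul_exp_neg_mul_Ioi hs hr, one_div, Complex.inv_cpow _ _ harg,
      Complex.cpow_neg]
  have hlim : Tendsto ((↑) : ℝ → ℂ) (𝓝[≠] 1) (𝓝[≠] 1) := by
    have hmaps : MapsTo ((↑) : ℝ → ℂ) {1}ᶜ {1}ᶜ := fun r hr => by simpa using hr
    simpa using Complex.continuous_ofReal.continuousWithinAt.tendsto_nhdsWithin (x := 1) hmaps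
  have hpos : ∀ᶠ r : ℝ in 𝓝[≠] 1, 0 < r := nhdsWithin_le_nhds (lt_mem_nhds one_pos)
  exact hlhs.eqOn_of_preconnected_of_frequently_eq hrhs
    (convex_halfSpace_re_gt 0).isPreconnected (by simp : (1 : ℂ) ∈ {v : ℂ | 0 < v.re})
    (hlim.frequently (hpos.mono fun r hr => hreal hr).frequently) hw

/-! ### Legendre's integral -/

theorem exp_two_pi_mul_sub_one_pos {x : ℝ} (hx : 0 < x) : 0 < Real.exp (2 * π * x) - 1 :=
  sub_pos.2 (Real.one_lt_exp_iff.2 (by positivity))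

theorem div_exp_two_pi_mul_sub_one_le {x : ℝ} (hx : 0 < x) :
    x / (Real.exp (2 * π * x) - 1) ≤ Real.exp (-π * x) := by
  have hsinh : Real.exp (-π * x) * (Real.exp (2 * π * x) - 1) = 2 * Real.sinh (π * x) := by
    rw [Real.sinh_eq, mul_sub, ← Real.exp_add]
    ring_nf
  rw [div_le_iff₀ (exp_two_pi_mul_sub_one_pos hx), hsinh]
  have hle : π * x ≤ Real.sinh (π * x) := Real.self_le_sinh_iff.2 (by positivity)
  nlinarith [Real.pi_gt_three]

theorem hasSum_exp_neg_add_mul (a : ℝ) {t : ℝ} (ht : 0 < t) :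
    HasSum (fun n : ℕ => Real.exp (-(n + a) * t))
      (Real.exp (-a * t) / (1 - Real.exp (-t))) := by
  have hlt : Real.exp (-t) < 1 := Real.exp_lt_one_iff.2 (neg_lt_zero.2 ht)
  convert! (hasSum_geometric_of_lt_one (Real.exp_pos _).le hlt).mul_left (Real.exp (-a * t)) using 1
  ext n
  rw [← Real.exp_nat_mul, ← Real.exp_add]
  ring_nf

theorem hasSum_exp_neg_succ_mul {y : ℝ} (hy : 0 < y) :
    HasSum (fun n : ℕ => Real.exp (-(n + 1) * y)) (1 / (Real.exp y - 1)) := by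
  have hne : Real.exp y - 1 ≠ 0 := (sub_pos.2 (Real.one_lt_exp_iff.2 hy)).ne'
  convert! hasSum_exp_neg_add_mul 1 hy using 1
  rw [neg_one_mul, Real.exp_neg]
  field_simp

theorem integrableOn_sin_mul_exp_neg_mul (t : ℝ) {b : ℝ} (hb : 0 < b) :
    IntegrableOn (fun x : ℝ => Real.sin (t * x) * Real.exp (-b * x)) (Ioi 0) := by
  refine Integrable.bdd_mul (c := 1) (integrableOn_exp_mul_Ioi (neg_lt_zero.2 hb) 0)
    (by fun_prop) (Eventually.of_forall fun x => ?_)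
  exact Real.abs_sin_le_one _

theorem integral_sin_mul_exp_neg_mul (t : ℝ) {b : ℝ} (hb : 0 < b) :
    ∫ x in Ioi (0 : ℝ), Real.sin (t * x) * Real.exp (-b * x) = t / (t ^ 2 + b ^ 2) := by
  have hre : (⟨-b, t⟩ : ℂ).re < 0 := neg_lt_zero.2 hb
  have him (x : ℝ) : (Complex.exp ((⟨-b, t⟩ : ℂ) * x)).im =
      Real.sin (t * x) * Real.exp (-b * x) := by
    rw [Complex.exp_im]
    simp [mul_comm]
  have h := integral_im (𝕜 := ℂ) (integrableOn_exp_mul_complex_Ioi hre 0)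
  simp only [RCLike.im_to_complex, him] at h
  rw [h, integral_exp_mul_complex_Ioi hre 0]
  simp [Complex.div_im, Complex.normSq_apply]
  ring

theorem integral_norm_sin_mul_exp_neg_mul_le (t : ℝ) {b : ℝ} (hb : 0 < b) :
    ∫ x in Ioi (0 : ℝ), ‖Real.sin (t * x) * Real.exp (-b * x)‖ ≤ |t| / b ^ 2 := by
  have hgamma : ∫ x in Ioi (0 : ℝ), x ^ (1 : ℝ) * Real.exp (-b * x) = 1 / b ^ 2 := by
    have h := Real.integral_rpow_mul_exp_neg_mul_Ioi two_pos hb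
    norm_num [Real.Gamma_two] at h ⊢
    exact h
  calc ∫ x in Ioi (0 : ℝ), ‖Real.sin (t * x) * Real.exp (-b * x)‖
      ≤ ∫ x in Ioi (0 : ℝ), |t| * (x ^ (1 : ℝ) * Real.exp (-b * x)) := by
        refine setIntegral_mono_on (integrableOn_sin_mul_exp_neg_mul t hb).norm
          ((integrableOn_rpow_mul_exp_neg_mul (by norm_num) hb).const_mul _) measurableSet_Ioi
          fun x (hx : 0 < x) => ?_
        have hsin : |Real.sin (t * x)| ≤ |t| * x := by
          simpa only [abs_mul, abs_of_pos hx] using Real.abs_sin_le_abs (x := t * x)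
        rw [norm_mul, Real.norm_eq_abs, Real.norm_eq_abs, Real.abs_exp, ← mul_assoc, Real.rpow_one]
        gcongr
    _ = |t| / b ^ 2 := by rw [integral_const_mul, hgamma, mul_one_div]

theorem I_mul_div_two_pi_mem_integerComplement {t : ℝ} (ht : t ≠ 0) :
    Complex.I * t / (2 * π) ∈ Complex.integerComplement := by
  have him : (Complex.I * t / (2 * π)).im = t / (2 * π) := by
    rw [mul_div_assoc]
    norm_cast
    rw [Complex.I_mul_im, Complex.ofReal_re]
  rintro ⟨n, hn⟩
  rw [← hn, Complex.intCast_im] at him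
  exact div_ne_zero ht (by positivity) him.symm

theorem cotTerm_I_mul_div_two_pi {t : ℝ} (ht : t ≠ 0) (n : ℕ) :
    cotTerm (Complex.I * t / (2 * π)) n =
      -(4 * π * Complex.I) * (t / (t ^ 2 + (2 * π * (n + 1)) ^ 2) : ℝ) := by
  have hπ : (π : ℂ) ≠ 0 := Complex.ofReal_ne_zero.2 Real.pi_ne_zero
  have hprod : (Complex.I * t / (2 * π) + (n + 1)) * (Complex.I * t / (2 * π) - (n + 1)) =
      -((t : ℂ) ^ 2 + (2 * π * (n + 1)) ^ 2) / (2 * π) ^ 2 := by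
    field_simp
    linear_combination (t : ℂ) ^ 2 * Complex.I_sq
  have hden : (t : ℂ) ^ 2 + (2 * π * (n + 1)) ^ 2 ≠ 0 := by
    exact_mod_cast (by positivity : t ^ 2 + (2 * π * (n + 1)) ^ 2 ≠ 0)
  rw [cotTerm_identity (I_mul_div_two_pi_mem_integerComplement ht), hprod]
  push_cast
  field_simp [hden]
  ring

/-- The partial fraction expansion of the cotangent at `i t / 2π`. -/
theorem hasSum_div_sq_add_sq {t : ℝ} (ht : t ≠ 0) :
    HasSum (fun n : ℕ => t / (t ^ 2 + (2 * π * (n + 1)) ^ 2))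
      ((1 / (1 - Real.exp (-t)) - 1 / 2 - 1 / t) / 2) := by
  have hπ : (π : ℂ) ≠ 0 := Complex.ofReal_ne_zero.2 Real.pi_ne_zero
  have ht' : (t : ℂ) ≠ 0 := Complex.ofReal_ne_zero.2 ht
  have hI := Complex.I_ne_zero
  have hmem := I_mul_div_two_pi_mem_integerComplement ht
  have hcot := (summable_cotTerm hmem).hasSum
  rw [← cot_series_rep' hmem] at hcot
  rw [← Complex.hasSum_ofReal]
  convert! hcot.mul_left (Complex.I / (4 * π)) using 1
  · ext n
    rw [cotTerm_I_mul_div_two_pi ht]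
    field_simp
    rw [Complex.I_sq]
    ring
  · have hexp : 2 * π * Complex.I * (Complex.I * t / (2 * π)) = -(t : ℂ) := by
      field_simp
      rw [Complex.I_sq]
    have hne : (1 : ℂ) - Complex.exp (-(t : ℂ)) ≠ 0 := by
      have h : 1 - Real.exp (-t) ≠ 0 :=
        sub_ne_zero.2 fun h => ht (neg_eq_zero.1 (Real.exp_eq_one_iff _ |>.1 h.symm))
      exact_mod_cast h
    rw [Complex.cot_pi_eq_exp_ratio, hexp]
    push_cast
    field_simp
    ring

/-- Expand `1 / (e ^ (2πx) - 1)` into a geometric series and integrate term by term. -/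
theorem integral_sin_div_exp_two_pi_mul_sub_one {t : ℝ} (ht : t ≠ 0) :
    ∫ x in Ioi (0 : ℝ), Real.sin (t * x) / (Real.exp (2 * π * x) - 1) =
      (1 / (1 - Real.exp (-t)) - 1 / 2 - 1 / t) / 2 := by
  have hb (n : ℕ) : 0 < 2 * π * (n + 1) := by positivity
  have hsummable : Summable fun n : ℕ => |t| / (2 * π * (n + 1)) ^ 2 := by
    have h : Summable fun n : ℕ => 1 / ((n : ℝ) + 1) ^ 2 := by
      exact_mod_cast (summable_nat_add_iff 1).2 (Real.summable_one_div_nat_pow.2 one_lt_two)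
    refine (h.mul_left (|t| / (2 * π) ^ 2)).congr fun n => ?_
    field_simp
  have hsum := hasSum_integral_of_summable_integral_norm
    (fun n => integrableOn_sin_mul_exp_neg_mul t (hb n))
    (hsummable.of_nonneg_of_le (fun n => integral_nonneg fun x => norm_nonneg _)
      fun n => integral_norm_sin_mul_exp_neg_mul_le t (hb n))
  simp only [integral_sin_mul_exp_neg_mul t (hb _)] at hsum
  rw [← hsum.unique (hasSum_div_sq_add_sq ht)]
  refine setIntegral_congr_fun measurableSet_Ioi fun x (hx : 0 < x) => ?_
  have hgeom := (hasSum_exp_neg_succ_mul (y := 2 * π * x) (by positivity)).mul_left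
    (Real.sin (t * x))
  rw [div_eq_mul_one_div, ← hgeom.tsum_eq]
  congr! 4 with n
  ring

/-! ### The Hurwitz zeta function -/

theorem hasSum_hurwitzZetaReal {a : ℝ} (ha : 0 < a) {s : ℂ} (hs : 1 < s.re) :
    HasSum (fun n : ℕ => 1 / ((n + a : ℝ) : ℂ) ^ s) (hurwitzZetaReal s a) := by
  obtain ⟨m, hm⟩ := Nat.exists_eq_add_one_of_ne_zero (Nat.ceil_pos.2 ha).ne'
  have hle : a ≤ m + 1 := by exact_mod_cast hm ▸ Nat.le_ceil a
  have hlt : (m : ℝ) < a := Nat.lt_ceil.1 (hm ▸ m.lt_succ_self)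
  have hcoe : (a : UnitAddCircle) = ((a - m : ℝ) : UnitAddCircle) := by
    have hm0 : ((m : ℝ) : UnitAddCircle) = 0 := (AddCircle.coe_eq_zero_iff 1).2 ⟨m, by simp⟩
    rw [AddCircle.coe_sub, hm0, sub_zero]
  have hsum := HurwitzZeta.hasSum_hurwitzZeta_of_one_lt_re
    (⟨by linarith, by linarith⟩ : a - m ∈ Icc (0 : ℝ) 1) hs
  rw [← hcoe, ← hasSum_nat_add_iff' m] at hsum
  convert! hsum using 1
  · ext n
    push_cast
    ring_nf
  · rw [hurwitzZetaReal, hm, Nat.add_sub_cancel]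
    congr! 2 with k
    rw [Complex.cpow_neg, one_div]
    push_cast
    ring_nf

theorem hurwitzZetaReal_add_one {a : ℝ} (ha : 0 < a) (s : ℂ) :
    hurwitzZetaReal s (a + 1) = hurwitzZetaReal s a - (a : ℂ) ^ (-s) := by
  obtain ⟨m, hm⟩ := Nat.exists_eq_add_one_of_ne_zero (Nat.ceil_pos.2 ha).ne'
  have hindex (k : ℕ) : a + 1 - ((m + 1 + 1 : ℕ) - 1) + k = a - ((m + 1 : ℕ) - 1) + k := by
    push_cast
    ring
  have hlast : a - ((m + 1 : ℕ) - 1) + m = a := by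
    push_cast
    ring
  simp only [hurwitzZetaReal, Nat.ceil_add_one ha.le, hm,
    Nat.add_sub_cancel, Finset.sum_range_succ, AddCircle.coe_add_period, hindex, hlast]
  ring

theorem hurwitzZetaReal_one (s : ℂ) : hurwitzZetaReal s 1 = riemannZeta s := by
  rw [hurwitzZetaReal, AddCircle.coe_period, HurwitzZeta.hurwitzZeta_zero]
  simp

theorem differentiableAt_hurwitzZetaReal (a : ℝ) {s : ℂ} (hs : s ≠ 1) :
    DifferentiableAt ℂ (fun s => hurwitzZetaReal s a) s := by
  refine (HurwitzZeta.differentiableAt_hurwitzZeta _ hs).sub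
    (DifferentiableAt.fun_sum fun k hk => differentiableAt_id.neg.const_cpow (Or.inl ?_))
  have hceil : 0 < ⌈a⌉₊ := by
    have := Finset.mem_range.1 hk
    omega
  have hbase : 0 < a - (⌈a⌉₊ - 1) + k := by
    linarith [Nat.ceil_lt_add_one (Nat.ceil_pos.1 hceil).le, k.cast_nonneg (α := ℝ)]
  exact_mod_cast hbase.ne'

theorem mellin_exp_div_one_sub_exp {a : ℝ} (ha : 0 < a) {s : ℂ} (hs : 1 < s.re) :
    mellin (fun t => ((Real.exp (-a * t) / (1 - Real.exp (-t)) : ℝ) : ℂ)) s =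
      Complex.Gamma s * hurwitzZetaReal s a := by
  have hzeta := hasSum_hurwitzZetaReal ha hs
  have hmellin := hasSum_mellin (a := fun _ : ℕ => (1 : ℂ)) (p := fun n : ℕ => (n : ℝ) + a)
    (F := fun t => ((Real.exp (-a * t) / (1 - Real.exp (-t)) : ℝ) : ℂ))
    (fun n => Or.inr (by positivity)) (zero_lt_one.trans hs) (fun t ht => ?_) ?_
  · refine hmellin.unique ?_
    simpa only [mul_one_div, mul_one] using hzeta.mul_left (Complex.Gamma s)
  · have hgeom := Complex.hasSum_ofReal.2 (hasSum_exp_neg_add_mul a ht)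
    simpa only [one_mul] using hgeom
  · refine hzeta.summable.norm.congr fun n => ?_
    rw [norm_div, Complex.norm_cpow_eq_rpow_re_of_pos (by positivity)]

/-! ### Hermite's formula -/

theorem exp_abs_log_le {r : ℝ} (hr : 0 < r) : Real.exp |Real.log r| ≤ r + r⁻¹ := by
  have hinv : 0 < r⁻¹ := inv_pos.2 hr
  rcases abs_choice (Real.log r) with h | h
  · rw [h, Real.exp_log hr]
    exact le_add_of_nonneg_right hinv.le
  · rw [h, Real.exp_neg, Real.exp_log hr]
    exact le_add_of_nonneg_left hr.le

theorem norm_cpow_le {w u : ℂ} (hw : w ≠ 0) {n : ℕ} (hu : ‖u‖ ≤ n) :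
    ‖w ^ u‖ ≤ n ! * Real.exp (‖w‖ + ‖w‖⁻¹) * Real.exp (n * π) := by
  have hpos : 0 < ‖w‖ := norm_pos_iff.2 hw
  have hlog : ‖Complex.log w‖ ≤ |Real.log ‖w‖| + π := by
    refine (Complex.norm_le_abs_re_add_abs_im _).trans ?_
    rw [Complex.log_re, Complex.log_im]
    gcongr
    exact Complex.abs_arg_le_pi w
  calc ‖w ^ u‖ ≤ Real.exp ‖Complex.log w * u‖ := by
        rw [Complex.cpow_def_of_ne_zero hw]
        exact Complex.norm_exp_le_exp_norm _
    _ ≤ Real.exp ((|Real.log ‖w‖| + π) * n) := by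
        rw [norm_mul]
        gcongr
    _ = Real.exp |Real.log ‖w‖| ^ n * Real.exp (n * π) := by
        rw [← Real.exp_nat_mul, ← Real.exp_add]
        ring_nf
    _ ≤ n ! * Real.exp (‖w‖ + ‖w‖⁻¹) * Real.exp (n * π) := by
        gcongr
        calc Real.exp |Real.log ‖w‖| ^ n ≤ (‖w‖ + ‖w‖⁻¹) ^ n := by
              gcongr
              exact exp_abs_log_le hpos
          _ ≤ n ! * Real.exp (‖w‖ + ‖w‖⁻¹) := by
              rw [← div_le_iff₀' (by positivity)]
              exact Real.pow_div_factorial_le_exp _ (by positivity) n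

theorem add_mul_I_mem_slitPlane {a : ℝ} (ha : 0 < a) (x : ℝ) :
    (a + x * Complex.I : ℂ) ∈ Complex.slitPlane :=
  Or.inl (by simpa using ha)

theorem sub_mul_I_mem_slitPlane {a : ℝ} (ha : 0 < a) (x : ℝ) :
    (a - x * Complex.I : ℂ) ∈ Complex.slitPlane :=
  Or.inl (by simpa using ha)

theorem norm_add_mul_I_cpow_le {a x y : ℝ} (ha : 0 < a) (hy : |y| ≤ x) {u : ℂ} {n : ℕ}
    (hu : ‖u‖ ≤ n) :
    ‖(a + y * Complex.I : ℂ) ^ u‖ ≤ n ! * Real.exp (a + a⁻¹ + n * π) * Real.exp x := by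
  have hre : (a + y * Complex.I : ℂ).re = a := by simp
  have him : (a + y * Complex.I : ℂ).im = y := by simp
  have hle_norm : a ≤ ‖(a + y * Complex.I : ℂ)‖ := by
    simpa only [hre, abs_of_pos ha] using Complex.abs_re_le_norm (a + y * Complex.I)
  have hnorm_le : ‖(a + y * Complex.I : ℂ)‖ ≤ a + x := by
    have h := Complex.norm_le_abs_re_add_abs_im (a + y * Complex.I)
    rw [hre, him, abs_of_pos ha] at h
    linarith
  refine (norm_cpow_le (Complex.slitPlane_ne_zero (add_mul_I_mem_slitPlane ha y)) hu).trans ?_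
  rw [mul_assoc, mul_assoc, ← Real.exp_add, ← Real.exp_add]
  gcongr n ! * Real.exp ?_
  linarith [inv_anti₀ ha hle_norm]

/-- The mean value inequality along the segment from `a - i x` to `a + i x`. -/
theorem exists_norm_cpow_sub_cpow_le {a : ℝ} (ha : 0 < a) (r : ℝ) :
    ∃ C, ∀ s : ℂ, ‖s‖ ≤ r → ∀ x : ℝ, 0 ≤ x →
      ‖(a + x * Complex.I : ℂ) ^ (-s) - (a - x * Complex.I) ^ (-s)‖ ≤ C * (x * Real.exp x) := by
  obtain ⟨n, hn⟩ := exists_nat_ge (r + 1)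
  refine ⟨2 * n * (n ! * Real.exp (a + a⁻¹ + n * π)), fun s hs x hx => ?_⟩
  have hderiv (y : ℝ) : HasDerivAt (fun y : ℝ => (a + y * Complex.I : ℂ) ^ (-s))
      (-s * (a + y * Complex.I : ℂ) ^ (-s - 1) * Complex.I) y := by
    have hline : HasDerivAt (fun v : ℂ => a + v * Complex.I) Complex.I (y : ℂ) := by
      simpa using ((hasDerivAt_id (y : ℂ)).mul_const Complex.I).const_add (a : ℂ)
    exact (hline.cpow_const (add_mul_I_mem_slitPlane ha y)).comp_ofReal
  have hexponent : ‖-s - 1‖ ≤ n := by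
    have h := norm_sub_le (-s) 1
    rw [norm_neg, norm_one] at h
    linarith
  have hbound (y : ℝ) (hy : y ∈ Icc (-x) x) :
      ‖-s * (a + y * Complex.I : ℂ) ^ (-s - 1) * Complex.I‖ ≤
        n * (n ! * Real.exp (a + a⁻¹ + n * π) * Real.exp x) := by
    rw [norm_mul, norm_mul, Complex.norm_I, mul_one, norm_neg]
    gcongr
    · linarith
    · exact norm_add_mul_I_cpow_le ha (abs_le.2 hy) hexponent
  have hmean := (convex_Icc (-x) x).norm_image_sub_le_of_norm_hasDerivWithin_le
    (fun y _ => (hderiv y).hasDerivWithinAt) hbound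
    (left_mem_Icc.2 (by linarith)) (right_mem_Icc.2 (by linarith))
  rw [sub_neg_eq_add, Real.norm_of_nonneg (by positivity)] at hmean
  simp only [Complex.ofReal_neg, neg_mul, ← sub_eq_add_neg] at hmean
  exact hmean.trans_eq (by ring)

/-- The integrand of Hermite's formula for `ζ(s, a)`. On the principal branch it equals
`2 sin(s arctan(x / a)) (a² + x²) ^ (-s / 2) / (e ^ (2πx) - 1)`. -/
noncomputable def hermiteIntegrand (a : ℝ) (s : ℂ) (x : ℝ) : ℂ :=
  Complex.I * ((a + x * Complex.I) ^ (-s) - (a - x * Complex.I) ^ (-s)) /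
    ((Real.exp (2 * π * x) - 1 : ℝ) : ℂ)

theorem exists_norm_hermiteIntegrand_le {a : ℝ} (ha : 0 < a) (r : ℝ) :
    ∃ C, ∀ s : ℂ, ‖s‖ ≤ r → ∀ x : ℝ, 0 < x →
      ‖hermiteIntegrand a s x‖ ≤ C * Real.exp ((1 - π) * x) := by
  obtain ⟨C, hC⟩ := exists_norm_cpow_sub_cpow_le ha r
  refine ⟨|C|, fun s hs x hx => ?_⟩
  have hkernel := exp_two_pi_mul_sub_one_pos hx
  rw [hermiteIntegrand, norm_div, norm_mul, Complex.norm_I, one_mul,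
    Complex.norm_of_nonneg hkernel.le]
  calc ‖(a + x * Complex.I : ℂ) ^ (-s) - (a - x * Complex.I) ^ (-s)‖ / (Real.exp (2 * π * x) - 1)
      ≤ |C| * (x * Real.exp x) / (Real.exp (2 * π * x) - 1) := by
        gcongr
        exact (hC s hs x hx.le).trans (by gcongr; exact le_abs_self C)
    _ = |C| * Real.exp x * (x / (Real.exp (2 * π * x) - 1)) := by ring
    _ ≤ |C| * Real.exp x * Real.exp (-π * x) := by
        gcongr
        exact div_exp_two_pi_mul_sub_one_le hx
    _ = |C| * Real.exp ((1 - π) * x) := by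
        rw [mul_assoc, ← Real.exp_add]
        ring_nf

theorem aestronglyMeasurable_hermiteIntegrand (a : ℝ) (s : ℂ) :
    AEStronglyMeasurable (hermiteIntegrand a s) (volume.restrict (Ioi 0)) := by
  apply Measurable.aestronglyMeasurable
  unfold hermiteIntegrand
  fun_prop

theorem hasDerivAt_hermiteIntegrand {a : ℝ} (ha : 0 < a) (s : ℂ) (x : ℝ) :
    HasDerivAt (hermiteIntegrand a · x)
      (Complex.I * (Complex.log (a - x * Complex.I) * (a - x * Complex.I) ^ (-s) -
        Complex.log (a + x * Complex.I) * (a + x * Complex.I) ^ (-s)) /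
          ((Real.exp (2 * π * x) - 1 : ℝ) : ℂ)) s := by
  have hadd := (hasDerivAt_id s).neg.const_cpow
    (Or.inl (Complex.slitPlane_ne_zero (add_mul_I_mem_slitPlane ha x)))
  have hsub := (hasDerivAt_id s).neg.const_cpow
    (Or.inl (Complex.slitPlane_ne_zero (sub_mul_I_mem_slitPlane ha x)))
  refine (((hadd.sub hsub).const_mul Complex.I).div_const _).congr_deriv ?_
  simp only [Pi.neg_apply, id_eq]
  ring

theorem integrableOn_deriv_and_hasDerivAt_integral_hermiteIntegrand {a : ℝ} (ha : 0 < a) (s : ℂ) :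
    IntegrableOn (fun x => deriv (hermiteIntegrand a · x) s) (Ioi 0) ∧
      HasDerivAt (fun s => ∫ x in Ioi (0 : ℝ), hermiteIntegrand a s x)
        (∫ x in Ioi (0 : ℝ), deriv (hermiteIntegrand a · x) s) s := by
  obtain ⟨C, hC⟩ := exists_norm_hermiteIntegrand_le ha (‖s‖ + 1)
  refine integrable_deriv_and_hasDerivAt_integral_of_norm_le one_pos
    (aestronglyMeasurable_hermiteIntegrand a) (Eventually.of_forall fun x v _ =>
      (hasDerivAt_hermiteIntegrand ha v x).differentiableAt.differentiableWithinAt) ?_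
    ((integrableOn_exp_mul_Ioi (by linarith [Real.pi_gt_three] : 1 - π < 0) 0).const_mul C)
  filter_upwards [ae_restrict_mem measurableSet_Ioi] with x hx v hv
  refine hC v ?_ x hx
  linarith [norm_le_norm_add_norm_sub' v s, mem_ball_iff_norm.1 hv]

theorem integrableOn_deriv_hermiteIntegrand {a : ℝ} (ha : 0 < a) (s : ℂ) :
    IntegrableOn (fun x => deriv (hermiteIntegrand a · x) s) (Ioi 0) :=
  (integrableOn_deriv_and_hasDerivAt_integral_hermiteIntegrand ha s).1

theorem hasDerivAt_integral_hermiteIntegrand {a : ℝ} (ha : 0 < a) (s : ℂ) :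
    HasDerivAt (fun s => ∫ x in Ioi (0 : ℝ), hermiteIntegrand a s x)
      (∫ x in Ioi (0 : ℝ), deriv (hermiteIntegrand a · x) s) s :=
  (integrableOn_deriv_and_hasDerivAt_integral_hermiteIntegrand ha s).2

theorem cexp_mul_two_mul_sin_eq (a t x : ℝ) :
    Complex.exp (-(a * t)) * ((2 * Real.sin (t * x) : ℝ) : ℂ) =
      Complex.I * (Complex.exp (-((a + x * Complex.I) * t)) -
        Complex.exp (-((a - x * Complex.I) * t))) := by
  have hadd : -((a + x * Complex.I) * (t : ℂ)) = -(a * t) + -(t * x) * Complex.I := by ring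
  have hsub : -((a - x * Complex.I) * (t : ℂ)) = -(a * t) + t * x * Complex.I := by ring
  rw [hadd, hsub, Complex.exp_add, Complex.exp_add]
  push_cast
  rw [Complex.sin]
  ring

theorem integral_cpow_mul_cexp_mul_sin_div {a : ℝ} (ha : 0 < a) {s : ℂ} (hs : 0 < s.re) (x : ℝ) :
    ∫ t in Ioi (0 : ℝ), (t : ℂ) ^ (s - 1) • Complex.exp (-(a * t)) *
        ((2 * Real.sin (t * x) / (Real.exp (2 * π * x) - 1) : ℝ) : ℂ) =
      Complex.Gamma s * hermiteIntegrand a s x := by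
  have hadd : 0 < (a + x * Complex.I : ℂ).re := by simpa using ha
  have hsub : 0 < (a - x * Complex.I : ℂ).re := by simpa using ha
  have hdiff := integral_sub (mellinConvergent_cexp_neg_mul hs hadd)
    (mellinConvergent_cexp_neg_mul hs hsub)
  have hmellin := mellin_cexp_neg_mul hs hadd
  have hmellin' := mellin_cexp_neg_mul hs hsub
  rw [mellin] at hmellin hmellin'
  rw [hmellin, hmellin'] at hdiff
  calc ∫ t in Ioi (0 : ℝ), (t : ℂ) ^ (s - 1) • Complex.exp (-(a * t)) *
        ((2 * Real.sin (t * x) / (Real.exp (2 * π * x) - 1) : ℝ) : ℂ)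
      = ∫ t in Ioi (0 : ℝ), Complex.I / ((Real.exp (2 * π * x) - 1 : ℝ) : ℂ) *
          ((t : ℂ) ^ (s - 1) • Complex.exp (-((a + x * Complex.I) * t)) -
            (t : ℂ) ^ (s - 1) • Complex.exp (-((a - x * Complex.I) * t))) := by
        congr! 2 with t
        rw [Complex.ofReal_div, mul_div_assoc', smul_mul_assoc, cexp_mul_two_mul_sin_eq]
        simp only [smul_eq_mul]
        ring
    _ = Complex.Gamma s * hermiteIntegrand a s x := by
        rw [integral_const_mul, hdiff, hermiteIntegrand]
        ring

theorem norm_two_mul_sin_div_le {t x : ℝ} (ht : 0 < t) (hx : 0 < x) :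
    ‖((2 * Real.sin (t * x) / (Real.exp (2 * π * x) - 1) : ℝ) : ℂ)‖ ≤
      t * (2 * Real.exp (-π * x)) := by
  have hkernel := exp_two_pi_mul_sub_one_pos hx
  rw [Complex.norm_real, norm_div, norm_mul, Real.norm_two, Real.norm_eq_abs,
    Real.norm_of_nonneg hkernel.le]
  calc 2 * |Real.sin (t * x)| / (Real.exp (2 * π * x) - 1)
      ≤ 2 * (t * x) / (Real.exp (2 * π * x) - 1) := by
        gcongr
        exact Real.abs_sin_le_abs.trans_eq (abs_of_pos (mul_pos ht hx))
    _ = 2 * t * (x / (Real.exp (2 * π * x) - 1)) := by ring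
    _ ≤ 2 * t * Real.exp (-π * x) := by
        gcongr
        exact div_exp_two_pi_mul_sub_one_le hx
    _ = t * (2 * Real.exp (-π * x)) := by ring

theorem integrable_cpow_mul_cexp_mul_sin_div {a : ℝ} (ha : 0 < a) {s : ℂ} (hs : -1 < s.re) :
    Integrable (fun p : ℝ × ℝ => (p.1 : ℂ) ^ (s - 1) • Complex.exp (-(a * p.1)) *
        ((2 * Real.sin (p.1 * p.2) / (Real.exp (2 * π * p.2) - 1) : ℝ) : ℂ))
      ((volume.restrict (Ioi 0)).prod (volume.restrict (Ioi 0))) := by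
  have ht_int := integrableOn_rpow_mul_exp_neg_mul hs ha
  have hx_int : IntegrableOn (fun x : ℝ => 2 * Real.exp (-π * x)) (Ioi 0) :=
    (integrableOn_exp_mul_Ioi (neg_lt_zero.2 Real.pi_pos) 0).const_mul 2
  refine (ht_int.mul_prod hx_int).mono' (Measurable.aestronglyMeasurable (by fun_prop)) ?_
  rw [Measure.prod_restrict]
  filter_upwards [ae_restrict_mem (measurableSet_Ioi.prod measurableSet_Ioi)]
  rintro ⟨t, x⟩ ⟨ht : 0 < t, hx : 0 < x⟩
  calc ‖(t : ℂ) ^ (s - 1) • Complex.exp (-(a * t)) *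
          ((2 * Real.sin (t * x) / (Real.exp (2 * π * x) - 1) : ℝ) : ℂ)‖
      ≤ t ^ (s.re - 1) * Real.exp (-a * t) * (t * (2 * Real.exp (-π * x))) := by
        rw [norm_mul, norm_cpow_mul_cexp_neg_mul s a ht, Complex.ofReal_re]
        gcongr
        exact norm_two_mul_sin_div_le ht hx
    _ = t ^ s.re * Real.exp (-a * t) * (2 * Real.exp (-π * x)) := by
        rw [Real.rpow_sub_one ht.ne']
        field_simp

/-- Fubini: integrating in `x` first gives Legendre's integral. -/
theorem hasMellin_cexp_neg_mul_mul_legendre {a : ℝ} (ha : 0 < a) {s : ℂ} (hs : 0 < s.re) :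
    HasMellin (fun t : ℝ => Complex.exp (-(a * t)) *
        ((1 / (1 - Real.exp (-t)) - 1 / 2 - 1 / t : ℝ) : ℂ)) s
      (Complex.Gamma s * ∫ x in Ioi (0 : ℝ), hermiteIntegrand a s x) := by
  have hintegrable := integrable_cpow_mul_cexp_mul_sin_div ha (by linarith : -1 < s.re)
  have hinner {t : ℝ} (ht : t ∈ Ioi 0) :
      ∫ x in Ioi (0 : ℝ), (t : ℂ) ^ (s - 1) • Complex.exp (-(a * t)) *
          ((2 * Real.sin (t * x) / (Real.exp (2 * π * x) - 1) : ℝ) : ℂ) =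
        (t : ℂ) ^ (s - 1) • (Complex.exp (-(a * t)) *
          ((1 / (1 - Real.exp (-t)) - 1 / 2 - 1 / t : ℝ) : ℂ)) := by
    simp only [mul_div_assoc]
    rw [integral_const_mul, integral_complex_ofReal, integral_const_mul,
      integral_sin_div_exp_two_pi_mul_sub_one (ne_of_gt ht), mul_div_cancel₀ _ two_ne_zero,
      smul_mul_assoc]
  constructor
  · exact IntegrableOn.congr_fun hintegrable.integral_prod_left (fun t => hinner) measurableSet_Ioi
  · rw [mellin, ← setIntegral_congr_fun measurableSet_Ioi (fun t => hinner),
      integral_integral_swap hintegrable]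
    simp only [integral_cpow_mul_cexp_mul_sin_div ha hs, integral_const_mul]

theorem exp_div_one_sub_exp_eq (a t : ℝ) :
    ((Real.exp (-a * t) / (1 - Real.exp (-t)) : ℝ) : ℂ) =
      Complex.exp (-(a * t)) / 2 + (t : ℂ) ^ (-1 : ℂ) • Complex.exp (-(a * t)) +
        Complex.exp (-(a * t)) * ((1 / (1 - Real.exp (-t)) - 1 / 2 - 1 / t : ℝ) : ℂ) := by
  rw [Complex.cpow_neg_one, smul_eq_mul]
  push_cast
  rw [neg_mul]
  ring

theorem hurwitzZetaReal_eq_hermite_of_one_lt_re {a : ℝ} (ha : 0 < a) {s : ℂ} (hs : 1 < s.re) :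
    hurwitzZetaReal s a = (a : ℂ) ^ (-s) / 2 + (a : ℂ) ^ (1 - s) / (s - 1) +
      ∫ x in Ioi (0 : ℝ), hermiteIntegrand a s x := by
  have hs₀ : 0 < s.re := zero_lt_one.trans hs
  have hs₁ : 0 < (s - 1).re := by simpa using hs
  have hsub : s - 1 ≠ 0 := fun h => hs₁.ne' (by rw [h, Complex.zero_re])
  have ha' : 0 < (a : ℂ).re := ha
  have hhalf : HasMellin (fun t : ℝ => Complex.exp (-(a * t)) / 2) s
      ((a : ℂ) ^ (-s) * Complex.Gamma s / 2) :=
    ⟨(mellinConvergent_cexp_neg_mul hs₀ ha').div_const 2, by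
      rw [mellin_div_const, mellin_cexp_neg_mul hs₀ ha']⟩
  have hinv : HasMellin (fun t : ℝ => (t : ℂ) ^ (-1 : ℂ) • Complex.exp (-(a * t))) s
      ((a : ℂ) ^ (1 - s) * Complex.Gamma (s - 1)) :=
    ⟨MellinConvergent.cpow_smul.2 (mellinConvergent_cexp_neg_mul hs₁ ha'), by
      rw [mellin_cpow_smul, ← sub_eq_add_neg, mellin_cexp_neg_mul hs₁ ha', neg_sub]⟩
  have hrem := hasMellin_cexp_neg_mul_mul_legendre ha hs₀
  have hsum := (hasMellin_add (hasMellin_add hhalf.1 hinv.1).1 hrem.1).2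
  rw [(hasMellin_add hhalf.1 hinv.1).2, hhalf.2, hinv.2, hrem.2] at hsum
  have hGamma : Complex.Gamma s = (s - 1) * Complex.Gamma (s - 1) := by
    simpa using Complex.Gamma_add_one (s - 1) hsub
  refine mul_left_cancel₀ (Complex.Gamma_ne_zero_of_re_pos hs₀) ?_
  rw [← mellin_exp_div_one_sub_exp ha hs]
  simp only [exp_div_one_sub_exp_eq]
  rw [hsum, hGamma]
  field_simp

theorem hurwitzZetaReal_eq_hermite {a : ℝ} (ha : 0 < a) {s : ℂ} (hs : s ≠ 1) :
    hurwitzZetaReal s a = (a : ℂ) ^ (-s) / 2 + (a : ℂ) ^ (1 - s) / (s - 1) +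
      ∫ x in Ioi (0 : ℝ), hermiteIntegrand a s x := by
  have ha' : (a : ℂ) ≠ 0 := Complex.ofReal_ne_zero.2 ha.ne'
  have hlhs : AnalyticOnNhd ℂ (fun s => hurwitzZetaReal s a) {1}ᶜ :=
    DifferentiableOn.analyticOnNhd (fun s hs =>
      (differentiableAt_hurwitzZetaReal a hs).differentiableWithinAt) isOpen_compl_singleton
  have hrhs : AnalyticOnNhd ℂ (fun s => (a : ℂ) ^ (-s) / 2 + (a : ℂ) ^ (1 - s) / (s - 1) +
      ∫ x in Ioi (0 : ℝ), hermiteIntegrand a s x) {1}ᶜ := by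
    refine DifferentiableOn.analyticOnNhd (fun s hs => DifferentiableAt.differentiableWithinAt ?_)
      isOpen_compl_singleton
    refine .add (.add ?_ ?_) (hasDerivAt_integral_hermiteIntegrand ha s).differentiableAt
    · exact (DifferentiableAt.const_cpow (by fun_prop) (Or.inl ha')).div_const 2
    · exact (DifferentiableAt.const_cpow (by fun_prop) (Or.inl ha')).div (by fun_prop)
        (sub_ne_zero.2 hs)
  have hconn : IsPreconnected ({1}ᶜ : Set ℂ) :=
    (isConnected_compl_singleton_of_one_lt_rank (by simp) 1).isPreconnected
  refine hlhs.eqOn_of_preconnected_of_eventuallyEq hrhs hconn (z₀ := 2) (by simp) ?_ hs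
  filter_upwards [(isOpen_lt continuous_const Complex.continuous_re).mem_nhds
    (by simp : (2 : ℂ) ∈ {v : ℂ | 1 < v.re})] with v hv
  exact hurwitzZetaReal_eq_hermite_of_one_lt_re ha hv

/-! ### Binet's formula -/

theorem log_add_mul_I {a : ℝ} (ha : 0 < a) (x : ℝ) :
    Complex.log (a + x * Complex.I) =
      ((Real.log (x ^ 2 + a ^ 2) / 2 : ℝ) : ℂ) + (Real.arctan (x / a) : ℂ) * Complex.I := by
  have hre : 0 < (a + x * Complex.I : ℂ).re := by simpa using ha
  have harg : Complex.arg (a + x * Complex.I) = Real.arctan (x / a) := by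
    have hlt := abs_lt.1 (Complex.abs_arg_lt_pi_div_two_iff.2 (Or.inl hre))
    rw [← Real.arctan_tan hlt.1 hlt.2, Complex.tan_arg]
    simp
  rw [Complex.log, harg, Complex.norm_add_mul_I, Real.log_sqrt (by positivity), add_comm (a ^ 2)]

theorem log_sub_mul_I {a : ℝ} (ha : 0 < a) (x : ℝ) :
    Complex.log (a - x * Complex.I) =
      ((Real.log (x ^ 2 + a ^ 2) / 2 : ℝ) : ℂ) - (Real.arctan (x / a) : ℂ) * Complex.I := by
  simpa [neg_div, ← sub_eq_add_neg] using log_add_mul_I ha (-x)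

theorem deriv_hermiteIntegrand_zero {a : ℝ} (ha : 0 < a) (x : ℝ) :
    deriv (hermiteIntegrand a · x) 0 =
      ((2 * Real.arctan (x / a) / (Real.exp (2 * π * x) - 1) : ℝ) : ℂ) := by
  rw [(hasDerivAt_hermiteIntegrand ha 0 x).deriv, Complex.ofReal_div, log_add_mul_I ha,
    log_sub_mul_I ha]
  congr 1
  simp only [neg_zero, Complex.cpow_zero, Complex.ofReal_mul, Complex.ofReal_div,
    Complex.ofReal_ofNat]
  linear_combination (-2 * (Real.arctan (x / a) : ℂ)) * Complex.I_sq

theorem deriv_hermiteIntegrand_neg_one {a : ℝ} (ha : 0 < a) (x : ℝ) :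
    deriv (hermiteIntegrand a · x) (-1) =
      ((a * (2 * Real.arctan (x / a) / (Real.exp (2 * π * x) - 1)) +
        x * Real.log (x ^ 2 + a ^ 2) / (Real.exp (2 * π * x) - 1) : ℝ) : ℂ) := by
  rw [(hasDerivAt_hermiteIntegrand ha (-1) x).deriv, ← mul_div_assoc, ← add_div, Complex.ofReal_div,
    log_add_mul_I ha, log_sub_mul_I ha]
  congr 1
  simp only [neg_neg, Complex.cpow_one, Complex.ofReal_add, Complex.ofReal_mul,
    Complex.ofReal_div, Complex.ofReal_ofNat]
  linear_combination (-2 * a * (Real.arctan (x / a) : ℂ) - x * (Real.log (x ^ 2 + a ^ 2) : ℂ)) *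
    Complex.I_sq

theorem deriv_hurwitzZetaReal {a : ℝ} (ha : 0 < a) {s : ℂ} (hs : s ≠ 1) :
    deriv (fun s => hurwitzZetaReal s a) s =
      -(Real.log a * (a : ℂ) ^ (-s)) / 2 - Real.log a * (a : ℂ) ^ (1 - s) / (s - 1) -
        (a : ℂ) ^ (1 - s) / (s - 1) ^ 2 +
        ∫ x in Ioi (0 : ℝ), deriv (hermiteIntegrand a · x) s := by
  have ha' : (a : ℂ) ≠ 0 := Complex.ofReal_ne_zero.2 ha.ne'
  have hsub : s - 1 ≠ 0 := sub_ne_zero.2 hs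
  have hhermite : (fun s => hurwitzZetaReal s a) =ᶠ[𝓝 s] fun s =>
      (a : ℂ) ^ (-s) / 2 + (a : ℂ) ^ (1 - s) / (s - 1) +
        ∫ x in Ioi (0 : ℝ), hermiteIntegrand a s x := by
    filter_upwards [isOpen_compl_singleton.mem_nhds hs] with v hv
    exact hurwitzZetaReal_eq_hermite ha hv
  have hhalf := ((hasDerivAt_id s).fun_neg.const_cpow (c := (a : ℂ)) (Or.inl ha')).div_const 2
  have hpole := (((hasDerivAt_id s).const_sub 1).const_cpow (c := (a : ℂ)) (Or.inl ha')).fun_div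
    ((hasDerivAt_id s).sub_const 1) hsub
  have hsum := (hhalf.fun_add hpole).fun_add (hasDerivAt_integral_hermiteIntegrand ha s)
  simp only [id_eq] at hsum
  rw [hhermite.deriv_eq, hsum.deriv, Complex.ofReal_log ha.le]
  field_simp
  ring

/-- The arctangent integral of Binet's second formula for `log Γ(a)`. -/
noncomputable def binetIntegral (a : ℝ) : ℝ :=
  ∫ x in Ioi (0 : ℝ), 2 * Real.arctan (x / a) / (Real.exp (2 * π * x) - 1)

/-- The right-hand side of Binet's second formula for `log Γ(a)`. -/
noncomputable def binetFunction (a : ℝ) : ℝ :=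
  (a - 1 / 2) * Real.log a - a + Real.log (2 * π) / 2 + binetIntegral a

theorem integrableOn_arctan_div_exp_two_pi_mul_sub_one {a : ℝ} (ha : 0 < a) :
    IntegrableOn (fun x => 2 * Real.arctan (x / a) / (Real.exp (2 * π * x) - 1)) (Ioi 0) := by
  have h := (integrableOn_deriv_hermiteIntegrand ha 0).re
  simpa only [deriv_hermiteIntegrand_zero ha, RCLike.re_to_complex, Complex.ofReal_re,
    IntegrableOn] using h

theorem integrableOn_mul_log_div_exp_two_pi_mul_sub_one {a : ℝ} (ha : 0 < a) :
    IntegrableOn (fun x => x * Real.log (x ^ 2 + a ^ 2) / (Real.exp (2 * π * x) - 1)) (Ioi 0) := by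
  have h := (integrableOn_deriv_hermiteIntegrand ha (-1)).re
  simp only [deriv_hermiteIntegrand_neg_one ha, RCLike.re_to_complex, Complex.ofReal_re] at h
  simpa only [Pi.sub_def, add_sub_cancel_left, IntegrableOn] using
    h.sub ((integrableOn_arctan_div_exp_two_pi_mul_sub_one ha).const_mul a)

theorem deriv_hurwitzZetaReal_zero {a : ℝ} (ha : 0 < a) :
    deriv (fun s => hurwitzZetaReal s a) 0 =
      ((binetFunction a - Real.log (2 * π) / 2 : ℝ) : ℂ) := by
  rw [deriv_hurwitzZetaReal ha zero_ne_one]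
  simp only [deriv_hermiteIntegrand_zero ha]
  rw [integral_complex_ofReal, binetFunction, binetIntegral]
  simp only [neg_zero, Complex.cpow_zero, sub_zero, Complex.cpow_one]
  push_cast
  ring

theorem deriv_hurwitzZetaReal_neg_one {a : ℝ} (ha : 0 < a) :
    deriv (fun s => hurwitzZetaReal s a) (-1) =
      ((a ^ 2 / 2 * (Real.log a - 1 / 2) - a / 2 * Real.log a + a * binetIntegral a +
        ∫ x in Ioi (0 : ℝ),
          x * Real.log (x ^ 2 + a ^ 2) / (Real.exp (2 * π * x) - 1) : ℝ) : ℂ) := by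
  rw [deriv_hurwitzZetaReal ha (by norm_num)]
  simp only [deriv_hermiteIntegrand_neg_one ha]
  rw [integral_complex_ofReal,
    integral_add ((integrableOn_arctan_div_exp_two_pi_mul_sub_one ha).const_mul a)
      (integrableOn_mul_log_div_exp_two_pi_mul_sub_one ha), integral_const_mul, ← binetIntegral]
  have htwo : (1 : ℂ) - -1 = (2 : ℕ) := by norm_num
  rw [htwo, Complex.cpow_natCast, neg_neg, Complex.cpow_one]
  push_cast
  ring

theorem binetFunction_one : binetFunction 1 = 0 := by
  have hzeta : (fun s => hurwitzZetaReal s 1) = riemannZeta := funext hurwitzZetaReal_one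
  have hderiv := deriv_hurwitzZetaReal_zero one_pos
  rw [hzeta, deriv_riemannZeta_zero] at hderiv
  have hreal : -Real.log (2 * π) / 2 = binetFunction 1 - Real.log (2 * π) / 2 := by
    rw [← Complex.ofReal_inj, ← hderiv]
    push_cast [Complex.ofReal_log two_pi_pos.le]
    rfl
  linarith

theorem binetFunction_add_one {a : ℝ} (ha : 0 < a) :
    binetFunction (a + 1) = binetFunction a + Real.log a := by
  have ha' : (a : ℂ) ≠ 0 := Complex.ofReal_ne_zero.2 ha.ne'
  have hpow := (hasDerivAt_id (0 : ℂ)).fun_neg.const_cpow (c := (a : ℂ)) (Or.inl ha')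
  simp only [id_eq, neg_zero, Complex.cpow_zero, one_mul, mul_neg, mul_one] at hpow
  have hderiv := deriv_hurwitzZetaReal_zero (by positivity : 0 < a + 1)
  simp only [hurwitzZetaReal_add_one ha] at hderiv
  rw [deriv_fun_sub (differentiableAt_hurwitzZetaReal a zero_ne_one) hpow.differentiableAt,
    hpow.deriv, deriv_hurwitzZetaReal_zero ha, sub_neg_eq_add, ← Complex.ofReal_log ha.le] at hderiv
  have hreal : binetFunction a - Real.log (2 * π) / 2 + Real.log a =
      binetFunction (a + 1) - Real.log (2 * π) / 2 := by exact_mod_cast hderiv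
  linarith

theorem convexOn_Ioi_of_hasDerivAt_of_monotoneOn {f f' : ℝ → ℝ} {c : ℝ}
    (hf : ∀ a ∈ Ioi c, HasDerivAt f (f' a) a) (hf' : MonotoneOn f' (Ioi c)) :
    ConvexOn ℝ (Ioi c) f := by
  refine MonotoneOn.convexOn_of_deriv (convex_Ioi c)
    (fun a ha => (hf a ha).continuousAt.continuousWithinAt) ?_ ?_
  · rw [interior_Ioi]
    exact fun a ha => (hf a ha).differentiableAt.differentiableWithinAt
  · rw [interior_Ioi]
    exact hf'.congr fun a ha => (hf a ha).deriv.symm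

theorem convexOn_arctan_div {x : ℝ} (hx : 0 ≤ x) :
    ConvexOn ℝ (Ioi 0) fun a : ℝ => Real.arctan (x / a) := by
  refine convexOn_Ioi_of_hasDerivAt_of_monotoneOn (f' := fun a => -(x / (x ^ 2 + a ^ 2)))
    (fun a (ha : 0 < a) => ?_) (fun a (ha : 0 < a) b _ hab => ?_)
  · convert! ((hasDerivAt_inv ha.ne').const_mul x).arctan using 1
    field_simp
    ring
  · dsimp only
    gcongr

theorem convexOn_sub_half_mul_log_sub :
    ConvexOn ℝ (Ioi 0) fun a : ℝ => (a - 1 / 2) * Real.log a - a := by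
  refine convexOn_Ioi_of_hasDerivAt_of_monotoneOn (f' := fun a => Real.log a - 1 / (2 * a))
    (fun a (ha : 0 < a) => ?_) (fun a (ha : 0 < a) b _ hab => ?_)
  · convert! (((hasDerivAt_id a).sub_const (1 / 2)).mul (Real.hasDerivAt_log ha.ne')).sub
      (hasDerivAt_id a) using 1
    simp only [id_eq]
    field_simp
    ring
  · dsimp only
    gcongr

theorem convexOn_binetIntegral : ConvexOn ℝ (Ioi 0) binetIntegral := by
  refine integral_convexOn_of_integrand_ae (convex_Ioi 0) ?_
    fun a ha => integrableOn_arctan_div_exp_two_pi_mul_sub_one ha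
  filter_upwards [ae_restrict_mem measurableSet_Ioi] with x (hx : 0 < x)
  have hkernel := exp_two_pi_mul_sub_one_pos hx
  refine ((convexOn_arctan_div hx.le).smul
    (by positivity : 0 ≤ 2 / (Real.exp (2 * π * x) - 1))).congr fun a _ => ?_
  simp only [smul_eq_mul]
  ring

theorem convexOn_binetFunction : ConvexOn ℝ (Ioi 0) binetFunction :=
  (convexOn_sub_half_mul_log_sub.add_const _).add convexOn_binetIntegral

/-- Binet's second formula, by the Bohr–Mollerup characterization of `Γ`. -/
theorem log_Gamma_eq_binetFunction {a : ℝ} (ha : 0 < a) :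
    Real.log (Real.Gamma a) = binetFunction a := by
  have hGamma := Real.eq_Gamma_of_log_convex (f := fun y => Real.exp (binetFunction y))
    (by simpa only [Function.comp_def, Real.log_exp] using convexOn_binetFunction)
    (fun {y} hy => by rw [binetFunction_add_one hy, add_comm, Real.exp_add, Real.exp_log hy])
    (fun {y} _ => Real.exp_pos _) (by rw [binetFunction_one, Real.exp_zero]) ha
  rw [← hGamma, Real.log_exp]

end

/-- Hermite-type integral representation of log G(z+1) for z > 0. -/
theorem logBarnesG1p_eq_hermite_integral (z : ℝ) (hz : 0 < z) :
    logBarnesG1p z =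
      ((z ^ 2 / 2 * (Real.log z - 3 / 2) : ℝ) : ℂ) - z * deriv riemannZeta 0
        + deriv riemannZeta (-1)
        - ((∫ x in Set.Ioi (0 : ℝ),
            x * Real.log (x ^ 2 + z ^ 2) / (Real.exp (2 * π * x) - 1) : ℝ) : ℂ) := by
  rw [logBarnesG1p, hurwitzZetaDerivNegOne, deriv_hurwitzZetaReal_neg_one hz,
    log_Gamma_eq_binetFunction hz, deriv_riemannZeta_zero, binetFunction]
  push_cast [Complex.ofReal_log two_pi_pos.le]
  ring
end

section
/- The integral ∫₀^∞ x·log(1 + x²)/(e^{2πx} + 1) dx equals 3/4 − (23/24)·log 2 + (1/2)·ζ'(−1), where ζ' is the derivative of the Riemann zeta function. -/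
open Real MeasureTheory Filter

/-!
Write `log (1 + x²) = log (1 + x⁻²) + 2 log x`.

The contribution of `log x` is the derivative at `s = 2` of the Mellin transform of
`1 / (e^(2πx) + 1)`. For `Re s > 1` this transform is `(2π)^(-s) Γ(s) (1 - 2^(1-s)) ζ(s)`, and the
functional equation turns it into `(1 - 2^(1-s)) ζ(1 - s) / (2 cos (πs/2))`, whence `ζ'(-1)`.

For the other part, the partial fraction expansion of `tanh` says that `π / (e^(2πx) + 1)` is the
limiting error of the midpoint rule with unit steps for `b ↦ x / (x² + b²)` on `[0, ∞)`.
Integrating this against `x log (1 + (a / x)²)` gives the limiting midpoint error for an elementary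
function of `b`, which at `a = 1` is evaluated by summation by parts and Stirling's formula.
-/

open Set Topology

section Tonelli

variable {α β : Type*} [MeasurableSpace α] [MeasurableSpace β] {μ : Measure α} {ν : Measure β}
  [SFinite ν]

theorem integrable_prod_of_nonneg {f : α → β → ℝ}
    (hmeas : AEStronglyMeasurable (Function.uncurry f) (μ.prod ν))
    (hnonneg : ∀ᵐ a ∂μ, 0 ≤ᵐ[ν] f a) (hf : ∀ᵐ a ∂μ, Integrable (f a) ν)
    (hint : Integrable (fun a => ∫ b, f a b ∂ν) μ) :
    Integrable (Function.uncurry f) (μ.prod ν) := by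
  refine (integrable_prod_iff hmeas).2 ⟨hf, hint.congr ?_⟩
  filter_upwards [hnonneg] with a ha
  exact integral_congr_ae (ha.mono fun b hb => (Real.norm_of_nonneg hb).symm)

end Tonelli

section MidpointRule

/-- The error `∫₀ᴺ f - ∑_{n < N} f (n + 1/2)` of the composite midpoint rule with `N` unit steps
on `[0, N]`. -/
noncomputable def midpointDefect (f : ℝ → ℝ) (N : ℕ) : ℝ :=
  (∫ b in (0 : ℝ)..N, f b) - ∑ n ∈ Finset.range N, f (n + 1 / 2)

theorem midpointDefect_const_mul (c : ℝ) (f : ℝ → ℝ) (N : ℕ) :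
    midpointDefect (fun b => c * f b) N = c * midpointDefect f N := by
  simp only [midpointDefect, intervalIntegral.integral_const_mul, ← Finset.mul_sum, mul_sub]

theorem midpointDefect_congr {f g : ℝ → ℝ} (h : EqOn f g (Ici 0)) (N : ℕ) :
    midpointDefect f N = midpointDefect g N := by
  unfold midpointDefect
  congr 1
  · refine intervalIntegral.integral_congr fun b hb => h ?_
    exact (uIcc_of_le (Nat.cast_nonneg (α := ℝ) N) ▸ hb).1
  · exact Finset.sum_congr rfl fun n _ => h (by positivity : (0 : ℝ) ≤ n + 1 / 2)

theorem abs_midpointDefect_le_of_antitoneOn {f : ℝ → ℝ} {N : ℕ}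
    (hf : AntitoneOn f (Icc 0 N)) : |midpointDefect f N| ≤ f 0 - f N := by
  have hf' : AntitoneOn f (Icc 0 (0 + N)) := by rwa [zero_add]
  have upper := hf'.integral_le_sum
  have lower := hf'.sum_le_integral
  simp only [zero_add] at upper lower
  have hmid : ∀ n ∈ Finset.range N, f (n + 1 : ℕ) ≤ f (n + 1 / 2) ∧ f (n + 1 / 2) ≤ f n := by
    intro n hn
    have hn' : (n + 1 : ℝ) ≤ N := mod_cast Finset.mem_range.1 hn
    have hn0 : (0 : ℝ) ≤ n := n.cast_nonneg
    push_cast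
    exact ⟨hf ⟨by linarith, by linarith⟩ ⟨by linarith, hn'⟩ (by linarith),
      hf ⟨hn0, by linarith⟩ ⟨by linarith, by linarith⟩ (by linarith)⟩
  have hright := Finset.sum_le_sum fun n hn => (hmid n hn).1
  have hleft := Finset.sum_le_sum fun n hn => (hmid n hn).2
  have htelescope := Finset.sum_range_sub' (fun n : ℕ => f n) N
  rw [Finset.sum_sub_distrib, Nat.cast_zero] at htelescope
  rw [midpointDefect, abs_le]
  constructor <;> linarith

variable {α : Type*} [MeasurableSpace α] {μ : Measure α} {F : α → ℝ → ℝ} {N : ℕ}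

theorem integrable_midpointDefect
    (hint : Integrable (Function.uncurry F) (μ.prod (volume.restrict (Ioc 0 (N : ℝ)))))
    (hmid : ∀ n : ℕ, Integrable (fun a => F a (n + 1 / 2)) μ) :
    Integrable (fun a => midpointDefect (F a) N) μ := by
  simp only [midpointDefect, intervalIntegral.integral_of_le N.cast_nonneg]
  exact hint.integral_prod_left.sub (integrable_finsetSum _ fun n _ => hmid n)

theorem integral_midpointDefect [SFinite μ]
    (hint : Integrable (Function.uncurry F) (μ.prod (volume.restrict (Ioc 0 (N : ℝ)))))
    (hmid : ∀ n : ℕ, Integrable (fun a => F a (n + 1 / 2)) μ) :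
    ∫ a, midpointDefect (F a) N ∂μ = midpointDefect (fun b => ∫ a, F a b ∂μ) N := by
  simp only [midpointDefect, intervalIntegral.integral_of_le N.cast_nonneg]
  rw [← integral_integral_swap hint, ← integral_finsetSum _ fun n _ => hmid n]
  exact integral_sub hint.integral_prod_left (integrable_finsetSum _ fun n _ => hmid n)

end MidpointRule

section CauchyKernel

theorem tan_eq_cot_sub_two_mul_cot_two_mul {w : ℂ} (hw : Complex.sin (2 * w) ≠ 0) :
    Complex.tan w = Complex.cot w - 2 * Complex.cot (2 * w) := by
  rw [Complex.sin_two_mul] at hw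
  have hsin : Complex.sin w ≠ 0 := fun h => hw (by simp [h])
  have hcos : Complex.cos w ≠ 0 := fun h => hw (by simp [h])
  rw [Complex.tan, Complex.cot, Complex.cot, Complex.sin_two_mul, Complex.cos_two_mul']
  field_simp
  ring

theorem hasSum_cotTerm {z : ℂ} (hz : z ∈ Complex.integerComplement) :
    HasSum (cotTerm z) (π * Complex.cot (π * z) - 1 / z) :=
  cot_series_rep' hz ▸ (summable_cotTerm hz).hasSum

-- In `tan w = cot w - 2 * cot (2 * w)`, the terms of odd index in the series for `cot (2 * w)`
-- cancel the series for `cot w`.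
theorem hasSum_pi_mul_tan {z : ℂ} (hz : 2 * z ∈ Complex.integerComplement) :
    HasSum (fun n : ℕ => 2 * z / ((n + 1 / 2) ^ 2 - z ^ 2)) (π * Complex.tan (π * z)) := by
  have hz' : z ∈ Complex.integerComplement := by
    rw [Complex.mem_integerComplement_iff] at hz ⊢
    rintro ⟨n, rfl⟩
    exact hz ⟨2 * n, by push_cast; ring⟩
  have hodd : HasSum (fun n : ℕ => cotTerm (2 * z) (2 * n + 1))
      (1 / 2 * (π * Complex.cot (π * z) - 1 / z)) := by
    convert! (hasSum_cotTerm hz').mul_left (1 / 2) using 2 with n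
    have hsub : 2 * z - ((2 * n + 1 : ℕ) + 1) = 2 * (z - (n + 1)) := by push_cast; ring
    have hadd : 2 * z + ((2 * n + 1 : ℕ) + 1) = 2 * (z + (n + 1)) := by push_cast; ring
    simp only [cotTerm, hsub, hadd, one_div, mul_inv, ← mul_add]
  have heven := (summable_cotTerm hz).comp_injective (i := (2 * ·))
    (mul_right_injective₀ two_ne_zero)
  have hsplit := (heven.hasSum.even_add_odd hodd).unique (hasSum_cotTerm hz)
  have hsin : Complex.sin (2 * (π * z)) ≠ 0 := by
    convert sin_pi_mul_ne_zero hz using 2; ring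
  convert! heven.hasSum.mul_left (-2) using 1
  · ext n
    have hsub : 2 * z - (2 * n + 1) ≠ 0 := by
      simpa [sub_eq_add_neg] using Complex.integerComplement_add_ne_zero hz (-(2 * n + 1))
    have hadd : 2 * z + (2 * n + 1) ≠ 0 := by
      simpa using Complex.integerComplement_add_ne_zero hz (2 * n + 1)
    have hfactor : ((n : ℂ) + 1 / 2) ^ 2 - z ^ 2
        = -(1 / 4) * ((2 * z - (2 * n + 1)) * (2 * z + (2 * n + 1))) := by ring
    rw [hfactor]
    simp only [Function.comp_apply, cotTerm, Nat.cast_mul, Nat.cast_ofNat]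
    field_simp
    ring
  · have harg : (π : ℂ) * (2 * z) = 2 * (π * z) := by ring
    have hz0 : z ≠ 0 := Complex.integerComplement.ne_zero hz'
    rw [tan_eq_cot_sub_two_mul_cot_two_mul hsin, eq_sub_of_add_eq hsplit, harg]
    field_simp
    ring

theorem hasSum_div_sq_add_half_sq (x : ℝ) :
    HasSum (fun n : ℕ => x / (x ^ 2 + (n + 1 / 2 : ℝ) ^ 2)) (π / 2 * tanh (π * x)) := by
  rcases eq_or_ne x 0 with rfl | hx
  · simp
  have hz : 2 * (x * Complex.I) ∈ Complex.integerComplement := by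
    rw [Complex.mem_integerComplement_iff]
    rintro ⟨n, hn⟩
    simpa [hx] using congrArg Complex.im hn
  have h := (hasSum_pi_mul_tan hz).mul_left (1 / (2 * Complex.I))
  rw [← Complex.hasSum_ofReal]
  convert! h using 1
  · ext n
    push_cast
    rw [mul_pow, Complex.I_sq]
    field_simp
    ring
  · rw [← mul_assoc (π : ℂ), ← Complex.ofReal_mul, Complex.tan_mul_I]
    push_cast
    field_simp

theorem tendsto_midpointDefect_div_sq_add_sq {x : ℝ} (hx : 0 < x) :
    Tendsto (midpointDefect fun b => x / (x ^ 2 + b ^ 2)) atTop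
      (𝓝 (π * (1 / (exp (2 * π * x) + 1)))) := by
  have hint : Tendsto (fun N : ℕ => ∫ b in (0 : ℝ)..N, x / (x ^ 2 + b ^ 2)) atTop (𝓝 (π / 2)) := by
    simp only [integral_div_sq_add_sq, zero_div, arctan_zero, sub_zero]
    exact (tendsto_nhds_of_tendsto_nhdsWithin tendsto_arctan_atTop).comp
      (tendsto_natCast_atTop_atTop.atTop_div_const hx)
  have htanh : π / 2 - π / 2 * tanh (π * x) = π * (1 / (exp (2 * π * x) + 1)) := by
    rw [tanh_eq, exp_neg, mul_assoc 2, two_mul (π * x), exp_add]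
    field_simp
    ring
  exact htanh ▸ hint.sub (hasSum_div_sq_add_half_sq x).tendsto_sum_nat

end CauchyKernel

section LogCauchyTransform

/-- The Cauchy transform `b ↦ π⁻¹ ∫₀^∞ x log (1 + (a / x)²) · x / (x² + b²) dx` in closed form for
`0 ≤ a` and `0 ≤ b`, see `integral_Ioi_mul_log_one_add_div_sq_mul_div`. -/
noncomputable def logCauchyTransform (a b : ℝ) : ℝ := a - b * log (a + b) + b * log b

theorem integrable_sq_div_sq_add_sq (d : ℝ) : Integrable fun x : ℝ => d ^ 2 / (x ^ 2 + d ^ 2) := by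
  rcases eq_or_ne d 0 with rfl | hd
  · simp
  · refine (integrable_inv_one_add_sq.comp_div hd).congr (.of_forall fun x => ?_)
    simp only
    field_simp
    ring

theorem integral_Ioi_sq_div_sq_add_sq {d : ℝ} (hd : 0 ≤ d) :
    ∫ x in Ioi (0 : ℝ), d ^ 2 / (x ^ 2 + d ^ 2) = π / 2 * d := by
  rcases hd.eq_or_lt with rfl | hd
  · simp
  · have h := integral_comp_mul_left_Ioi (fun x : ℝ => (1 + x ^ 2)⁻¹) 0 (inv_pos.2 hd)
    rw [mul_zero, integral_Ioi_inv_one_add_sq, arctan_zero, sub_zero, inv_inv, smul_eq_mul] at h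
    rw [mul_comm, ← h]
    congr 1 with x
    field_simp
    ring

variable {a b c : ℝ}

theorem sq_div_mul_eq_sub_div (hb : 0 ≤ b) (hc : 0 ≤ c) (hbc : b ≠ c) {x : ℝ} (hx : x ≠ 0) :
    x ^ 2 / ((x ^ 2 + b ^ 2) * (x ^ 2 + c ^ 2)) =
      (b ^ 2 / (x ^ 2 + b ^ 2) - c ^ 2 / (x ^ 2 + c ^ 2)) / (b ^ 2 - c ^ 2) := by
  have hne : b ^ 2 - c ^ 2 ≠ 0 := sub_ne_zero.2 ((pow_left_inj₀ hb hc two_ne_zero).not.2 hbc)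
  field_simp
  ring

theorem integrableOn_Ioi_sq_div_mul (hb : 0 ≤ b) (hc : 0 ≤ c) (hbc : b ≠ c) :
    IntegrableOn (fun x : ℝ => x ^ 2 / ((x ^ 2 + b ^ 2) * (x ^ 2 + c ^ 2))) (Ioi 0) :=
  (((integrable_sq_div_sq_add_sq b).sub (integrable_sq_div_sq_add_sq c)).div_const
    (b ^ 2 - c ^ 2)).integrableOn.congr_fun
      (fun _ hx => (sq_div_mul_eq_sub_div hb hc hbc (ne_of_gt hx)).symm) measurableSet_Ioi

theorem integral_Ioi_sq_div_mul (hb : 0 ≤ b) (hc : 0 ≤ c) (hbc : b ≠ c) :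
    ∫ x in Ioi (0 : ℝ), x ^ 2 / ((x ^ 2 + b ^ 2) * (x ^ 2 + c ^ 2)) = π / (2 * (b + c)) := by
  rw [setIntegral_congr_fun measurableSet_Ioi fun x hx =>
      sq_div_mul_eq_sub_div hb hc hbc (ne_of_gt hx), integral_div,
    integral_sub (integrable_sq_div_sq_add_sq b).integrableOn
      (integrable_sq_div_sq_add_sq c).integrableOn,
    integral_Ioi_sq_div_sq_add_sq hb, integral_Ioi_sq_div_sq_add_sq hc, sq_sub_sq]
  have hsub : b - c ≠ 0 := sub_ne_zero.2 hbc
  have hadd : b + c ≠ 0 := fun h => hbc (by linarith)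
  field_simp

theorem log_one_add_div_sq_eq_integral {x : ℝ} (hx : x ≠ 0) (a : ℝ) :
    log (1 + (a / x) ^ 2) = ∫ c in (0 : ℝ)..a, 2 * c / (x ^ 2 + c ^ 2) := by
  have hderiv : ∀ c : ℝ, HasDerivAt (fun c => log (x ^ 2 + c ^ 2)) (2 * c / (x ^ 2 + c ^ 2)) c := by
    intro c
    simpa using ((hasDerivAt_pow 2 c).const_add (x ^ 2)).log (by positivity)
  have hcont : Continuous fun c : ℝ => 2 * c / (x ^ 2 + c ^ 2) :=
    Continuous.div (by fun_prop) (by fun_prop) fun c => by positivity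
  rw [intervalIntegral.integral_eq_sub_of_hasDerivAt (fun c _ => hderiv c)
    (hcont.intervalIntegrable 0 a), ← log_div (by positivity) (by positivity)]
  congr 1
  field_simp
  ring

theorem intervalIntegrable_div_add (hb : 0 ≤ b) (ha : 0 ≤ a) :
    IntervalIntegrable (fun c => c / (b + c)) volume 0 a := by
  rw [intervalIntegrable_iff_integrableOn_Ioc_of_le ha]
  refine Measure.integrableOn_of_bounded (M := 1) (by simp)
    (by fun_prop : Measurable fun c : ℝ => c / (b + c)).aestronglyMeasurable ?_
  filter_upwards [ae_restrict_mem measurableSet_Ioc] with c hc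
  have hc0 : 0 < c := hc.1
  rw [Real.norm_of_nonneg (by positivity), div_le_one (by positivity)]
  linarith

theorem integral_div_add_eq_logCauchyTransform (hb : 0 ≤ b) (ha : 0 ≤ a) :
    ∫ c in (0 : ℝ)..a, c / (b + c) = logCauchyTransform a b := by
  have hcont : ContinuousOn (fun c => c - b * log (b + c)) (Icc 0 a) := by
    rcases hb.eq_or_lt with rfl | hb
    · simp only [zero_mul, sub_zero]
      exact continuousOn_id
    · refine continuousOn_id.sub (continuousOn_const.mul (.log (by fun_prop) fun c hc => ?_))
      exact (add_pos_of_pos_of_nonneg hb hc.1).ne'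
  have hderiv : ∀ c ∈ Ioo 0 a, HasDerivAt (fun c => c - b * log (b + c)) (c / (b + c)) c := by
    intro c hc
    have hne : b + c ≠ 0 := (add_pos_of_nonneg_of_pos hb hc.1).ne'
    convert! (hasDerivAt_id c).sub (((hasDerivAt_id c).const_add b).log hne |>.const_mul b) using 1
    simp only [id]
    field_simp
    ring
  rw [intervalIntegral.integral_eq_sub_of_hasDerivAt_of_le ha hcont hderiv
    (intervalIntegrable_div_add hb ha), logCauchyTransform, add_comm a b]
  simp only [add_zero, zero_sub]
  ring

theorem continuousOn_logCauchyTransform (ha : 0 ≤ a) :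
    ContinuousOn (logCauchyTransform a) (Ici 0) := by
  unfold logCauchyTransform
  rcases ha.eq_or_lt with rfl | ha
  · simpa using continuousOn_const
  · have hlog : ContinuousOn (fun b => log (a + b)) (Ici 0) :=
      .log (by fun_prop) fun b hb => (add_pos_of_pos_of_nonneg ha hb).ne'
    have hmul_log : ContinuousOn (fun b : ℝ => b * log b) (Ici 0) :=
      continuous_mul_log.continuousOn
    fun_prop

theorem integral_Ioi_two_mul_mul_sq_div_mul (hb : 0 ≤ b) (hc : 0 ≤ c) (hbc : b ≠ c) :
    ∫ x in Ioi (0 : ℝ), 2 * c * (x ^ 2 / ((x ^ 2 + b ^ 2) * (x ^ 2 + c ^ 2))) =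
      π * (c / (b + c)) := by
  rw [integral_const_mul, integral_Ioi_sq_div_mul hb hc hbc, mul_comm 2 (b + c)]
  have hadd : b + c ≠ 0 := fun h => hbc (by linarith)
  field_simp

theorem ae_restrict_Ioc_zero_nonneg_ne (a b : ℝ) :
    ∀ᵐ c ∂volume.restrict (Ioc 0 a), 0 ≤ c ∧ b ≠ c := by
  filter_upwards [ae_restrict_mem measurableSet_Ioc,
    ae_restrict_of_ae (Measure.ae_ne volume b)] with c hc hcb
  exact ⟨hc.1.le, hcb.symm⟩

theorem integrable_prod_two_mul_mul_sq_div_mul (ha : 0 ≤ a) (hb : 0 ≤ b) :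
    Integrable (Function.uncurry fun c x : ℝ =>
      2 * c * (x ^ 2 / ((x ^ 2 + b ^ 2) * (x ^ 2 + c ^ 2))))
      ((volume.restrict (Ioc 0 a)).prod (volume.restrict (Ioi 0))) := by
  have hae := ae_restrict_Ioc_zero_nonneg_ne a b
  refine integrable_prod_of_nonneg (Measurable.aestronglyMeasurable (by fun_prop)) ?_ ?_ ?_
  · filter_upwards [hae] with c hc
    refine .of_forall fun x => ?_
    have hc0 := hc.1
    positivity
  · filter_upwards [hae] with c hc
    exact (integrableOn_Ioi_sq_div_mul hb hc.1 hc.2).const_mul _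
  · have hdiv := (intervalIntegrable_iff_integrableOn_Ioc_of_le ha).1
      (intervalIntegrable_div_add hb ha)
    refine (hdiv.const_mul π).congr ?_
    filter_upwards [hae] with c hc
    exact (integral_Ioi_two_mul_mul_sq_div_mul hb hc.1 hc.2).symm

theorem mul_log_one_add_div_sq_mul_div_eq_integral {x : ℝ} (hx : x ≠ 0) (ha : 0 ≤ a) (b : ℝ) :
    x * log (1 + (a / x) ^ 2) * (x / (x ^ 2 + b ^ 2)) =
      ∫ c in Ioc 0 a, 2 * c * (x ^ 2 / ((x ^ 2 + b ^ 2) * (x ^ 2 + c ^ 2))) := by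
  rw [log_one_add_div_sq_eq_integral hx, ← intervalIntegral.integral_of_le ha,
    ← intervalIntegral.integral_const_mul, ← intervalIntegral.integral_mul_const]
  congr 1 with c
  field_simp

theorem integrableOn_Ioi_mul_log_one_add_div_sq_mul_div (ha : 0 ≤ a) (hb : 0 ≤ b) :
    IntegrableOn (fun x : ℝ => x * log (1 + (a / x) ^ 2) * (x / (x ^ 2 + b ^ 2))) (Ioi 0) :=
  (integrable_prod_two_mul_mul_sq_div_mul ha hb).integral_prod_right.congr <| by
    filter_upwards [ae_restrict_mem measurableSet_Ioi] with x hx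
    exact (mul_log_one_add_div_sq_mul_div_eq_integral (ne_of_gt hx) ha b).symm

theorem integral_Ioi_mul_log_one_add_div_sq_mul_div (ha : 0 ≤ a) (hb : 0 ≤ b) :
    ∫ x in Ioi (0 : ℝ), x * log (1 + (a / x) ^ 2) * (x / (x ^ 2 + b ^ 2)) =
      π * logCauchyTransform a b := by
  calc
    _ = ∫ x in Ioi (0 : ℝ), ∫ c in Ioc 0 a,
          2 * c * (x ^ 2 / ((x ^ 2 + b ^ 2) * (x ^ 2 + c ^ 2))) :=
      setIntegral_congr_fun measurableSet_Ioi fun x hx =>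
        mul_log_one_add_div_sq_mul_div_eq_integral (ne_of_gt hx) ha b
    _ = ∫ c in Ioc 0 a, ∫ x in Ioi (0 : ℝ),
          2 * c * (x ^ 2 / ((x ^ 2 + b ^ 2) * (x ^ 2 + c ^ 2))) :=
      (integral_integral_swap (integrable_prod_two_mul_mul_sq_div_mul ha hb)).symm
    _ = ∫ c in Ioc 0 a, π * (c / (b + c)) :=
      integral_congr_ae <| (ae_restrict_Ioc_zero_nonneg_ne a b).mono fun c hc =>
        integral_Ioi_two_mul_mul_sq_div_mul hb hc.1 hc.2
    _ = π * logCauchyTransform a b := by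
      rw [integral_const_mul, ← intervalIntegral.integral_of_le ha,
        integral_div_add_eq_logCauchyTransform hb ha]

theorem mul_log_one_add_div_sq_nonneg {x : ℝ} (hx : 0 ≤ x) (a : ℝ) :
    0 ≤ x * log (1 + (a / x) ^ 2) :=
  mul_nonneg hx (log_nonneg (le_add_of_nonneg_right (sq_nonneg _)))

theorem integrable_prod_mul_log_one_add_div_sq_mul_div (ha : 0 ≤ a) (B : ℝ) :
    Integrable (Function.uncurry fun x b : ℝ =>
      x * log (1 + (a / x) ^ 2) * (x / (x ^ 2 + b ^ 2)))
      ((volume.restrict (Ioi 0)).prod (volume.restrict (Ioc 0 B))) := by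
  have hpos := ae_restrict_mem (μ := volume) (measurableSet_Ioc (a := (0 : ℝ)) (b := B))
  refine (integrable_prod_of_nonneg (f := fun b x : ℝ =>
    x * log (1 + (a / x) ^ 2) * (x / (x ^ 2 + b ^ 2)))
    (Measurable.aestronglyMeasurable (by fun_prop)) ?_ ?_ ?_).swap
  · refine .of_forall fun b => ?_
    filter_upwards [ae_restrict_mem measurableSet_Ioi] with x (hx : 0 < x)
    exact mul_nonneg (mul_log_one_add_div_sq_nonneg hx.le a) (by positivity)
  · filter_upwards [hpos] with b hb
    exact integrableOn_Ioi_mul_log_one_add_div_sq_mul_div ha hb.1.le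
  · have hcont : ContinuousOn (fun b => π * logCauchyTransform a b) (Icc 0 B) :=
      continuousOn_const.mul ((continuousOn_logCauchyTransform ha).mono Icc_subset_Ici_self)
    refine (hcont.integrableOn_Icc.mono_set Ioc_subset_Icc_self).congr ?_
    filter_upwards [hpos] with b hb
    exact (integral_Ioi_mul_log_one_add_div_sq_mul_div ha hb.1.le).symm

theorem integral_Ioi_midpointDefect_mul_log_one_add_div_sq (ha : 0 ≤ a) (N : ℕ) :
    ∫ x in Ioi (0 : ℝ),
        midpointDefect (fun b => x * log (1 + (a / x) ^ 2) * (x / (x ^ 2 + b ^ 2))) N =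
      π * midpointDefect (logCauchyTransform a) N := by
  rw [integral_midpointDefect (integrable_prod_mul_log_one_add_div_sq_mul_div ha N)
      fun n => integrableOn_Ioi_mul_log_one_add_div_sq_mul_div ha (by positivity),
    ← midpointDefect_const_mul]
  exact midpointDefect_congr
    (fun b hb => integral_Ioi_mul_log_one_add_div_sq_mul_div ha hb) N

theorem antitoneOn_div_sq_add_sq {x : ℝ} (hx : 0 < x) :
    AntitoneOn (fun b : ℝ => x / (x ^ 2 + b ^ 2)) (Ici 0) := fun b (hb : 0 ≤ b) c _ hbc => by
  dsimp only
  gcongr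

theorem tendsto_midpointDefect_logCauchyTransform (ha : 0 ≤ a) :
    Tendsto (midpointDefect (logCauchyTransform a)) atTop
      (𝓝 (∫ x in Ioi (0 : ℝ), x * log (1 + (a / x) ^ 2) * (1 / (exp (2 * π * x) + 1)))) := by
  have hmeas (N : ℕ) := (integrable_midpointDefect
    (integrable_prod_mul_log_one_add_div_sq_mul_div ha N)
    fun n => integrableOn_Ioi_mul_log_one_add_div_sq_mul_div ha (by positivity)).1
  have hbound (N : ℕ) : ∀ᵐ x ∂volume.restrict (Ioi (0 : ℝ)),
      ‖midpointDefect (fun b => x * log (1 + (a / x) ^ 2) * (x / (x ^ 2 + b ^ 2))) N‖ ≤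
        x * log (1 + (a / x) ^ 2) * (x / (x ^ 2 + 0 ^ 2)) := by
    filter_upwards [ae_restrict_mem measurableSet_Ioi] with x (hx : 0 < x)
    have hweight := mul_log_one_add_div_sq_nonneg hx.le a
    have hdefect := abs_midpointDefect_le_of_antitoneOn (N := N)
      ((antitoneOn_div_sq_add_sq hx).mono Icc_subset_Ici_self)
    have hlast : 0 ≤ x / (x ^ 2 + (N : ℝ) ^ 2) := by positivity
    rw [midpointDefect_const_mul, norm_mul, Real.norm_of_nonneg hweight, Real.norm_eq_abs]
    gcongr
    linarith
  have hlim : ∀ᵐ x ∂volume.restrict (Ioi (0 : ℝ)), Tendsto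
      (midpointDefect fun b => x * log (1 + (a / x) ^ 2) * (x / (x ^ 2 + b ^ 2))) atTop
      (𝓝 (π * (x * log (1 + (a / x) ^ 2) * (1 / (exp (2 * π * x) + 1))))) := by
    filter_upwards [ae_restrict_mem measurableSet_Ioi] with x hx
    rw [mul_left_comm]
    exact ((tendsto_midpointDefect_div_sq_add_sq hx).const_mul _).congr fun N =>
      (midpointDefect_const_mul _ _ N).symm
  have h := tendsto_integral_of_dominated_convergence _ hmeas
    (integrableOn_Ioi_mul_log_one_add_div_sq_mul_div ha le_rfl) hbound hlim
  simp only [integral_Ioi_midpointDefect_mul_log_one_add_div_sq ha, integral_const_mul] at h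
  simpa [pi_ne_zero] using h.const_mul π⁻¹

theorem integrableOn_Ioi_mul_log_one_add_div_sq_div_exp_add_one (ha : 0 ≤ a) :
    IntegrableOn (fun x : ℝ => x * log (1 + (a / x) ^ 2) * (1 / (exp (2 * π * x) + 1)))
      (Ioi 0) := by
  refine (integrableOn_Ioi_mul_log_one_add_div_sq_mul_div ha le_rfl).mono'
    (Measurable.aestronglyMeasurable (by fun_prop)) ?_
  filter_upwards [ae_restrict_mem measurableSet_Ioi] with x (hx : 0 < x)
  have hweight := mul_log_one_add_div_sq_nonneg hx.le a
  have hkernel : 1 / (exp (2 * π * x) + 1) ≤ x / (x ^ 2 + 0 ^ 2) := by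
    rw [div_le_div_iff₀ (by positivity) (by positivity)]
    nlinarith [add_one_le_exp (2 * π * x), pi_gt_three]
  rw [norm_mul, Real.norm_of_nonneg hweight, Real.norm_of_nonneg (by positivity)]
  gcongr

end LogCauchyTransform

section Stirling

theorem sum_range_log_add_half (N : ℕ) :
    ∑ n ∈ Finset.range N, log (n + 1 / 2) =
      log (2 * N).factorial - N * log 4 - log N.factorial := by
  induction N with
  | zero => simp
  | succ N ih =>
    have heven : ((2 * (N + 1)).factorial : ℝ) =
        (2 * N).factorial * (N + 1 / 2) * 4 * (N + 1) := by
      rw [mul_add_one, Nat.factorial_succ, Nat.factorial_succ]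
      push_cast
      ring
    rw [Finset.sum_range_succ, ih, heven, Nat.factorial_succ]
    push_cast
    repeat rw [log_mul (by positivity) (by positivity)]
    ring

theorem tendsto_sum_range_log_add_half_sub :
    Tendsto (fun N : ℕ => ∑ n ∈ Finset.range N, log (n + 1 / 2) - (N * log N - N)) atTop
      (𝓝 (log 2 / 2)) := by
  have hstirling : Tendsto (fun N => log (Stirling.stirlingSeq N)) atTop (𝓝 (log √π)) :=
    Stirling.tendsto_stirlingSeq_sqrt_pi.log (by positivity)
  have hratio := (hstirling.comp (tendsto_id.const_mul_atTop' two_pos)).sub hstirling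
  rw [sub_self] at hratio
  refine (zero_add (log 2 / 2) ▸ hratio.add_const (log 2 / 2)).congr' ?_
  filter_upwards [eventually_gt_atTop 0] with N hN
  have hlog4 : log 4 = 2 * log 2 := by
    rw [show (4 : ℝ) = 2 ^ 2 by norm_num, log_pow, Nat.cast_ofNat]
  simp only [Function.comp_apply, id, Stirling.log_stirlingSeq_formula, sum_range_log_add_half,
    Nat.cast_mul, Nat.cast_ofNat]
  rw [log_div (by positivity) (by positivity), log_div (by positivity) (by positivity),
    log_mul (by positivity) (by positivity), log_mul (by positivity) (by positivity), log_exp,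
    hlog4]
  ring

theorem tendsto_sub_log_one_add_div_sq :
    Tendsto (fun x : ℝ => (x - log (1 + x)) / x ^ 2) (𝓝[≠] 0) (𝓝 (1 / 2)) := by
  have hpos : ∀ᶠ x : ℝ in 𝓝[≠] 0, 0 < 1 + x :=
    nhdsWithin_le_nhds <| (continuous_const_add 1).continuousAt.eventually_const_lt (by simp)
  have hne : ∀ᶠ x : ℝ in 𝓝[≠] 0, x ≠ 0 := self_mem_nhdsWithin
  refine HasDerivAt.lhopital_zero_nhdsNE (f' := fun x => 1 - 1 / (1 + x)) (g' := fun x => 2 * x)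
    ?_ ?_ ?_ ?_ ?_ ?_
  · filter_upwards [hpos] with x hx
    exact (hasDerivAt_id x).sub (((hasDerivAt_id x).const_add 1).log hx.ne')
  · exact .of_forall fun x => by simpa using hasDerivAt_pow 2 x
  · filter_upwards [hne] with x hx using mul_ne_zero two_ne_zero hx
  · have : ContinuousAt (fun x : ℝ => x - log (1 + x)) 0 :=
      continuousAt_id.sub (ContinuousAt.log (by fun_prop) (by simp))
    simpa using this.continuousWithinAt.tendsto
  · have : ContinuousAt (fun x : ℝ => x ^ 2) 0 := by fun_prop
    simpa using this.continuousWithinAt.tendsto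
  · have : ContinuousAt (fun x : ℝ => 1 / (2 * (1 + x))) 0 :=
      ContinuousAt.div (by fun_prop) (by fun_prop) (by simp)
    have hlim : Tendsto (fun x : ℝ => 1 / (2 * (1 + x))) (𝓝[≠] 0) (𝓝 (1 / 2)) := by
      simpa using this.continuousWithinAt.tendsto
    refine hlim.congr' ?_
    filter_upwards [hpos, hne] with x hx hx0
    field_simp
    ring

theorem integral_logCauchyTransform_one {N : ℝ} (hN : 0 ≤ N) :
    ∫ b in (0 : ℝ)..N, logCauchyTransform 1 b =
      N / 2 + N ^ 2 / 2 * log N - (N ^ 2 - 1) / 2 * log (1 + N) := by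
  have hcont : ContinuousOn
      (fun b => b / 2 + b / 2 * (b * log b) - (b ^ 2 - 1) / 2 * log (1 + b)) (Icc 0 N) := by
    have hlog : ContinuousOn (fun b => log (1 + b)) (Icc 0 N) :=
      .log (by fun_prop) fun b hb => (add_pos_of_pos_of_nonneg one_pos hb.1).ne'
    have hmul_log : ContinuousOn (fun b : ℝ => b * log b) (Icc 0 N) :=
      continuous_mul_log.continuousOn
    fun_prop
  have hderiv : ∀ b ∈ Ioo 0 N, HasDerivAt
      (fun b => b / 2 + b / 2 * (b * log b) - (b ^ 2 - 1) / 2 * log (1 + b))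
      (logCauchyTransform 1 b) b := by
    intro b hb
    have hb0 : 0 < b := hb.1
    have hhalf := (hasDerivAt_id b).div_const 2
    have hsq := ((hasDerivAt_pow 2 b).sub_const 1).div_const 2
    have hlog := ((hasDerivAt_id b).const_add 1).log (by simp only [id]; positivity)
    convert! (hhalf.add (hhalf.mul (hasDerivAt_mul_log hb0.ne'))).sub (hsq.mul hlog) using 1
    simp only [logCauchyTransform, id]
    field_simp
    ring
  rw [intervalIntegral.integral_eq_sub_of_hasDerivAt_of_le hN hcont hderiv]
  · simp only [log_zero, zero_div, add_zero, log_one, mul_zero, sub_zero]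
    ring
  · rw [intervalIntegrable_iff_integrableOn_Icc_of_le hN]
    exact ((continuousOn_logCauchyTransform zero_le_one).mono
      Icc_subset_Ici_self).integrableOn_Icc

theorem sum_range_logCauchyTransform_one (N : ℕ) :
    ∑ n ∈ Finset.range N, logCauchyTransform 1 (n + 1 / 2) =
      N - (N - 1 / 2) * log (N + 1 / 2) + log 2 / 2 +
        ∑ n ∈ Finset.range N, log (n + 1 / 2) := by
  induction N with
  | zero =>
    simp only [Finset.range_zero, Finset.sum_empty, Nat.cast_zero, zero_sub, zero_add, one_div,
      log_inv]
    ring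
  | succ N ih =>
    have hshift : 1 + ((N : ℝ) + 1 / 2) = N + 1 + 1 / 2 := by ring
    rw [Finset.sum_range_succ, ih, Finset.sum_range_succ, logCauchyTransform, hshift]
    push_cast
    ring

theorem midpointDefect_logCauchyTransform_one {N : ℕ} (hN : 0 < N) :
    midpointDefect (logCauchyTransform 1) N =
      ((N : ℝ)⁻¹ - log (1 + (N : ℝ)⁻¹)) / (N : ℝ)⁻¹ ^ 2 / 2 + N * log (1 + (1 / 2) / N) +
        (log (1 + (N : ℝ)⁻¹) - log (1 + (1 / 2) / N)) / 2 -
        (∑ n ∈ Finset.range N, log (n + 1 / 2) - (N * log N - N)) - log 2 / 2 := by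
  have hN0 : (N : ℝ) ≠ 0 := by positivity
  have hone : log (1 + (N : ℝ)) = log N + log (1 + (N : ℝ)⁻¹) := by
    rw [← log_mul hN0 (by positivity), mul_add, mul_one, mul_inv_cancel₀ hN0, add_comm]
  have hhalf : log ((N : ℝ) + 1 / 2) = log N + log (1 + (1 / 2) / N) := by
    rw [← log_mul hN0 (by positivity), mul_add, mul_one, mul_div_cancel₀ _ hN0]
  rw [midpointDefect, integral_logCauchyTransform_one N.cast_nonneg,
    sum_range_logCauchyTransform_one, hone, hhalf]
  field_simp
  ring

theorem tendsto_midpointDefect_logCauchyTransform_one :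
    Tendsto (midpointDefect (logCauchyTransform 1)) atTop (𝓝 (3 / 4 - log 2)) := by
  have hinv : Tendsto (fun N : ℕ => (N : ℝ)⁻¹) atTop (𝓝 0) := tendsto_inv_atTop_nhds_zero_nat
  have hquad := (tendsto_sub_log_one_add_div_sq.comp (tendsto_nhdsWithin_iff.2
    ⟨hinv, (eventually_ne_atTop 0).mono fun N hN => by simpa using hN⟩)).div_const 2
  have hlin := (tendsto_mul_log_one_add_div_atTop (1 / 2)).comp tendsto_natCast_atTop_atTop
  have hone : Tendsto (fun N : ℕ => log (1 + (N : ℝ)⁻¹)) atTop (𝓝 0) := by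
    simpa using (hinv.const_add 1).log (by simp)
  have hhalf : Tendsto (fun N : ℕ => log (1 + (1 / 2) / (N : ℝ))) atTop (𝓝 0) := by
    simpa using ((tendsto_const_div_atTop_nhds_zero_nat (1 / 2 : ℝ)).const_add 1).log (by simp)
  have h := (((hquad.add hlin).add ((hone.sub hhalf).div_const 2)).sub
    tendsto_sum_range_log_add_half_sub).sub_const (log 2 / 2)
  have hvalue : 1 / 2 / 2 + 1 / 2 + (0 - 0) / 2 - log 2 / 2 - log 2 / 2 = 3 / 4 - log 2 := by ring
  rw [hvalue] at h
  refine h.congr' ?_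
  filter_upwards [eventually_gt_atTop 0] with N hN
  exact (midpointDefect_logCauchyTransform_one hN).symm

theorem integral_Ioi_mul_log_one_add_one_div_sq_div_exp_add_one :
    ∫ x in Ioi (0 : ℝ), x * log (1 + (1 / x) ^ 2) * (1 / (exp (2 * π * x) + 1)) =
      3 / 4 - log 2 :=
  tendsto_nhds_unique (tendsto_midpointDefect_logCauchyTransform zero_le_one)
    tendsto_midpointDefect_logCauchyTransform_one

end Stirling

section Mellin

theorem hasSum_one_div_nat_add_one_cpow {s : ℂ} (hs : 1 < s.re) :
    HasSum (fun n : ℕ => 1 / ((n : ℂ) + 1) ^ s) (riemannZeta s) := by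
  rw [zeta_eq_tsum_one_div_nat_add_one_cpow hs]
  exact_mod_cast ((summable_nat_add_iff 1).2 (Complex.summable_one_div_nat_cpow.2 hs)).hasSum

theorem hasSum_neg_one_pow_div_nat_add_one_cpow {s : ℂ} (hs : 1 < s.re) :
    HasSum (fun n : ℕ => (-1 : ℂ) ^ n / ((n : ℂ) + 1) ^ s)
      ((1 - 2 * 2 ^ (-s)) * riemannZeta s) := by
  have hzeta := hasSum_one_div_nat_add_one_cpow hs
  have hodd : HasSum (fun k : ℕ => 1 / (((2 * k + 1 : ℕ) : ℂ) + 1) ^ s)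
      (2 ^ (-s) * riemannZeta s) := by
    convert! hzeta.mul_left ((2 : ℂ) ^ (-s)) using 2 with k
    have hdouble : ((2 * k + 1 : ℕ) : ℂ) + 1 = ((2 : ℕ) : ℂ) * ((k + 1 : ℕ) : ℂ) := by
      push_cast
      ring
    rw [hdouble, Complex.natCast_mul_natCast_cpow, Complex.cpow_neg]
    push_cast
    rw [one_div, one_div, mul_inv]
  obtain ⟨evenSum, heven⟩ : Summable fun k : ℕ => 1 / (((2 * k : ℕ) : ℂ) + 1) ^ s :=
    hzeta.summable.comp_injective (mul_right_injective₀ two_ne_zero)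
  have hsplit := (HasSum.even_add_odd (f := fun n : ℕ => 1 / ((n : ℂ) + 1) ^ s) heven hodd).unique
    hzeta
  have halternating := HasSum.even_add_odd (f := fun n : ℕ => (-1 : ℂ) ^ n / ((n : ℂ) + 1) ^ s)
    (by simpa [pow_mul] using heven)
    (by simpa [pow_succ, pow_mul, neg_div] using hodd.neg)
  convert! halternating using 1
  linear_combination -hsplit

theorem hasSum_neg_one_pow_mul_exp_neg {t : ℝ} (ht : 0 < t) :
    HasSum (fun n : ℕ => (-1) ^ n * exp (-(n + 1) * t)) (1 / (exp t + 1)) := by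
  have hlt : |-exp (-t)| < 1 := by simpa using ht
  convert! (hasSum_geometric_of_abs_lt_one hlt).mul_left (exp (-t)) using 1
  · ext n
    rw [neg_pow (exp (-t)), ← exp_nat_mul, mul_left_comm, ← exp_add]
    congr 2
    ring
  · rw [sub_neg_eq_add, exp_neg]
    field_simp

theorem mellin_one_div_exp_add_one {s : ℂ} (hs : 1 < s.re) :
    mellin (fun t : ℝ => ((1 / (exp t + 1) : ℝ) : ℂ)) s =
      Complex.Gamma s * ((1 - 2 * 2 ^ (-s)) * riemannZeta s) := by
  have hexp : ∀ t ∈ Ioi (0 : ℝ),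
      HasSum (fun n : ℕ => (-1 : ℂ) ^ n * (exp (-(n + 1 : ℝ) * t) : ℂ))
        ((1 / (exp t + 1) : ℝ) : ℂ) := fun t ht =>
    mod_cast Complex.hasSum_ofReal.2 (hasSum_neg_one_pow_mul_exp_neg ht)
  have hsummable : Summable fun n : ℕ => ‖(-1 : ℂ) ^ n‖ / (n + 1 : ℝ) ^ s.re := by
    simpa using (summable_nat_add_iff 1).2 (Real.summable_one_div_nat_rpow.2 hs)
  refine (hasSum_mellin (fun n => .inr n.cast_add_one_pos) (by linarith) hexp hsummable).unique ?_
  simpa [mul_div_assoc] using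
    (hasSum_neg_one_pow_div_nat_add_one_cpow hs).mul_left (Complex.Gamma s)

theorem mellin_one_div_exp_two_pi_mul_add_one_mul_cos {s : ℂ} (hs : 1 < s.re) :
    mellin (fun t : ℝ => ((1 / (exp (2 * π * t) + 1) : ℝ) : ℂ)) s *
        (2 * Complex.cos (π * s / 2)) =
      (1 - 2 * 2 ^ (-s)) * riemannZeta (1 - s) := by
  have hs_ne_neg : ∀ n : ℕ, s ≠ -n := by
    rintro n rfl
    have : (0 : ℝ) ≤ n := n.cast_nonneg
    simp only [Complex.neg_re, Complex.natCast_re] at hs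
    linarith
  have hs_ne_one : s ≠ 1 := by
    rintro rfl
    simp at hs
  rw [mellin_comp_mul_left (fun t : ℝ => ((1 / (exp t + 1) : ℝ) : ℂ)) s two_pi_pos,
    mellin_one_div_exp_add_one hs, riemannZeta_one_sub hs_ne_neg hs_ne_one, smul_eq_mul]
  push_cast
  ring

theorem isBigO_atTop_one_div_exp_mul_add_one {r : ℝ} (hr : 0 < r) (b : ℝ) :
    (fun t : ℝ => ((1 / (exp (r * t) + 1) : ℝ) : ℂ)) =O[atTop] (· ^ b) := by
  have hexp : (fun t : ℝ => ((1 / (exp (r * t) + 1) : ℝ) : ℂ)) =O[atTop]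
      fun t => exp (-r * t) := by
    refine .of_norm_le fun t => ?_
    rw [Complex.norm_real, Real.norm_of_nonneg (by positivity), neg_mul, exp_neg, ← one_div]
    gcongr
    linarith
  exact hexp.trans (isLittleO_exp_neg_mul_rpow_atTop hr b).isBigO

theorem isBigO_one_div_exp_mul_add_one (r : ℝ) (l : Filter ℝ) :
    (fun t : ℝ => ((1 / (exp (r * t) + 1) : ℝ) : ℂ)) =O[l] (1 : ℝ → ℝ) := by
  refine .of_norm_le fun t => ?_
  rw [Complex.norm_real, Real.norm_of_nonneg (by positivity), Pi.one_apply,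
    div_le_one (by positivity)]
  linarith [exp_pos (r * t)]

theorem mellin_hasDerivAt_one_div_exp_mul_add_one {r : ℝ} (hr : 0 < r) {s : ℂ} (hs : 0 < s.re) :
    MellinConvergent (fun t => log t • ((1 / (exp (r * t) + 1) : ℝ) : ℂ)) s ∧
      HasDerivAt (mellin fun t : ℝ => ((1 / (exp (r * t) + 1) : ℝ) : ℂ))
        (mellin (fun t => log t • ((1 / (exp (r * t) + 1) : ℝ) : ℂ)) s) s := by
  have hcont : Continuous fun t : ℝ => ((1 / (exp (r * t) + 1) : ℝ) : ℂ) :=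
    Complex.continuous_ofReal.comp
      (continuous_const.div (by fun_prop) fun t => by positivity)
  refine mellin_hasDerivAt_of_isBigO_rpow (hcont.locallyIntegrable.locallyIntegrableOn _)
    (isBigO_atTop_one_div_exp_mul_add_one hr _) (lt_add_one s.re) ?_ hs
  simpa [Pi.one_def] using isBigO_one_div_exp_mul_add_one r _

theorem cpow_two_sub_one_smul_log_smul_ofReal (x y : ℝ) :
    (x : ℂ) ^ ((2 : ℂ) - 1) • (log x • (y : ℂ)) = ((x * log x * y : ℝ) : ℂ) := by
  rw [show (2 : ℂ) - 1 = 1 by norm_num, Complex.cpow_one, smul_eq_mul, Complex.real_smul]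
  push_cast
  ring

theorem integrableOn_Ioi_mul_log_div_exp_mul_add_one {r : ℝ} (hr : 0 < r) :
    IntegrableOn (fun x => x * log x * (1 / (exp (r * x) + 1))) (Ioi 0) := by
  have h := (mellin_hasDerivAt_one_div_exp_mul_add_one hr (s := 2) (by simp)).1
  simp only [MellinConvergent, cpow_two_sub_one_smul_log_smul_ofReal] at h
  exact_mod_cast h.re

theorem hasDerivAt_mellin_one_div_exp_mul_add_one_two {r : ℝ} (hr : 0 < r) :
    HasDerivAt (mellin fun t : ℝ => ((1 / (exp (r * t) + 1) : ℝ) : ℂ))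
      (∫ x in Ioi (0 : ℝ), x * log x * (1 / (exp (r * x) + 1)) : ℝ) 2 := by
  have h := (mellin_hasDerivAt_one_div_exp_mul_add_one hr (s := 2) (by simp)).2
  simp only [mellin, cpow_two_sub_one_smul_log_smul_ofReal] at h
  rwa [integral_complex_ofReal] at h

theorem riemannZeta_neg_one : riemannZeta (-1) = -1 / 12 := by
  have h := riemannZeta_neg_nat_eq_bernoulli 1
  rw [Nat.cast_one, one_add_one_eq_two, bernoulli_two] at h
  rw [h]
  norm_num

theorem hasDerivAt_one_sub_two_mul_two_cpow_neg_mul_riemannZeta_one_sub :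
    HasDerivAt (fun s : ℂ => (1 - 2 * 2 ^ (-s)) * riemannZeta (1 - s))
      (-(log 2 / 24 + 1 / 2 * deriv riemannZeta (-1))) 2 := by
  have hzeta : HasDerivAt (fun s : ℂ => riemannZeta (1 - s)) (-deriv riemannZeta (-1)) 2 := by
    have hsub : (1 : ℂ) - 2 = -1 := by norm_num
    rw [← hsub]
    exact (differentiableAt_riemannZeta (by norm_num)).hasDerivAt.comp_const_sub 1 2
  have hfactor : HasDerivAt (fun s : ℂ => 1 - 2 * (2 : ℂ) ^ (-s))
      (-(2 * (2 ^ (-2 : ℂ) * Complex.log 2 * -1))) 2 :=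
    (((hasDerivAt_neg (2 : ℂ)).const_cpow (.inl two_ne_zero)).const_mul 2).const_sub 1
  convert! hfactor.mul hzeta using 1
  have hlog : Complex.log 2 = (log 2 : ℝ) := by simp
  have hpow : (2 : ℂ) ^ (-2 : ℂ) = 1 / 4 := by
    rw [Complex.cpow_neg]
    norm_num
  rw [hlog, hpow, show (1 : ℂ) - 2 = -1 by norm_num, riemannZeta_neg_one]
  ring

theorem two_mul_integral_Ioi_mul_log_div_exp_add_one :
    2 * ((∫ x in Ioi (0 : ℝ), x * log x * (1 / (exp (2 * π * x) + 1)) : ℝ) : ℂ) =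
      log 2 / 24 + 1 / 2 * deriv riemannZeta (-1) := by
  have hcos : HasDerivAt (fun s : ℂ => 2 * Complex.cos (π * s / 2)) 0 2 := by
    convert! (((hasDerivAt_id (2 : ℂ)).const_mul (π : ℂ)).div_const 2).ccos.const_mul 2 using 1
    simp
  have hleft := (hasDerivAt_mellin_one_div_exp_mul_add_one_two two_pi_pos).mul hcos
  have hre : ∀ᶠ s : ℂ in 𝓝 2, 1 < s.re :=
    (isOpen_lt continuous_const Complex.continuous_re).mem_nhds (by simp)
  have h := hleft.unique <|
    hasDerivAt_one_sub_two_mul_two_cpow_neg_mul_riemannZeta_one_sub.congr_of_eventuallyEq <|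
      hre.mono fun s => mellin_one_div_exp_two_pi_mul_add_one_mul_cos
  rw [mul_div_cancel_right₀ _ two_ne_zero, Complex.cos_pi] at h
  linear_combination -h

end Mellin

theorem log_one_add_sq_eq_add {x : ℝ} (hx : x ≠ 0) :
    log (1 + x ^ 2) = log (1 + (1 / x) ^ 2) + 2 * log x := by
  have hsq : 1 + x ^ 2 = (1 + (1 / x) ^ 2) * x ^ 2 := by
    field_simp
    ring
  rw [hsq, log_mul (by positivity) (by positivity), log_pow, Nat.cast_ofNat]

/-- ∫₀^∞ x log(1+x²)/(e^{2πx}+1) dx = 3/4 − (23/24) log 2 + (1/2) ζ'(−1). -/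
theorem integral_x_log_one_add_sq :
    ((∫ x in Set.Ioi (0 : ℝ),
        x * Real.log (1 + x ^ 2) / (Real.exp (2 * π * x) + 1) : ℝ) : ℂ) =
      3 / 4 - (23 / 24) * Real.log 2 + (1 / 2) * deriv riemannZeta (-1) := by
  have hsplit : ∀ x ∈ Ioi (0 : ℝ), x * log (1 + x ^ 2) / (exp (2 * π * x) + 1) =
      x * log (1 + (1 / x) ^ 2) * (1 / (exp (2 * π * x) + 1)) +
        2 * (x * log x * (1 / (exp (2 * π * x) + 1))) := by
    intro x hx
    rw [log_one_add_sq_eq_add (ne_of_gt hx)]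
    ring
  rw [setIntegral_congr_fun measurableSet_Ioi hsplit,
    integral_add (integrableOn_Ioi_mul_log_one_add_div_sq_div_exp_add_one zero_le_one)
      ((integrableOn_Ioi_mul_log_div_exp_mul_add_one two_pi_pos).const_mul 2),
    integral_const_mul, integral_Ioi_mul_log_one_add_one_div_sq_div_exp_add_one]
  push_cast
  linear_combination two_mul_integral_Ioi_mul_log_div_exp_add_one
end
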